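/- Let d ≥ 1, set s_d = d(d+1)/2, and let g be a real-analytic Riemannian metric on an open set Ω ⊆ ℝ^d containing a point p. Then there exist an open neighborhood U of p with U ⊆ Ω and an injective real-analytic map u : U → ℝ^{s_d} with (∇u(x))ᵀ ∇u(x) = g(x) for all x ∈ U; that is, every analytic d-dimensional metric admits a local analytic isometric embedding into the Janet dimension s_d. (Janet–Cartan theorem.) -/

import Mathlib

noncomputable section
open Matrix Set

attribute [local instance] Matrix.normedAddCommGroup Matrix.normedSpace

/-- The Jacobian matrix (n×d) of a map `u : ℝᵈ → ℝⁿ` at a point `x`. -/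
def Jac {d n : ℕ} (u : EuclideanSpace ℝ (Fin d) → EuclideanSpace ℝ (Fin n))
    (x : EuclideanSpace ℝ (Fin d)) : Matrix (Fin n) (Fin d) ℝ :=
  Matrix.of fun i j => fderiv ℝ u x (EuclideanSpace.single j 1) i

/-!
In normal coordinates the metric agrees with the Euclidean one to first order at the origin, and the
problem becomes one about convergent power series. Restrict the metric to a coordinate hyperplane
`t = 0` and subtract the metric of the quadrics `f = (xₐxₛ)ₐ`, which preserves flatness to first
order: by induction on the dimension the difference is the metric of some `v`, and `(v, f)` realizes
the restricted metric with linearly independent first and second derivatives along the hyperplane.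
With one more component, this freedom yields a first velocity off the hyperplane. The equations of
an isometric immersion `u` then become, for `i`, `j` tangent to the hyperplane and any `k`,

  `⟨∂ₖu, ∂ₜ²u⟩ = Γₜₜ,ₖ` and `⟨∂ᵢ∂ⱼu, ∂ₜ²u⟩ = ⟨∂ᵢ∂ₜu, ∂ⱼ∂ₜu⟩ + (terms of the metric)`,

which a linear right inverse solves for `∂ₜ²u`. Writing `u = U + ∬ w` with `w = ∂ₜ²u`, the nonlinear
terms involve `w` only through operators which integrate at least as often as they differentiate;
these are small in suitable weighted `ℓ¹` norms of the coefficients, so `w` is the fixed point of a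
contraction. The step to dimension `d` costs `d` new components, `d - 1` quadrics and one normal
direction, which add up to `d(d+1)/2`.
-/

namespace JanetCartan

open MvPowerSeries (coeff coeff_mul constantCoeff)
open Finset.HasAntidiagonal (antidiagonal mem_antidiagonal)
open scoped ENNReal NNReal Topology

/-- Formal power series with real coefficients in variables indexed by `σ`. -/
abbrev Series (σ : Type*) : Type _ := MvPowerSeries σ ℝ

variable {σ ι : Type*}

/-! ### Weighted `ℓ¹` norms -/

section WeightedNorm

variable {W W' : (σ →₀ ℕ) → ℝ≥0∞}

/-- The `ℓ¹` norm, possibly infinite, of the coefficients of a power series with respect to a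
weight. All the estimates of the Cauchy–Kovalevskaya argument are stated in such norms. -/
def wnorm (W : (σ →₀ ℕ) → ℝ≥0∞) (f : Series σ) : ℝ≥0∞ :=
  ∑' α, ‖coeff α f‖ₑ * W α

theorem wnorm_zero : wnorm W (0 : Series σ) = 0 := by simp [wnorm]

theorem wnorm_add_le (f g : Series σ) : wnorm W (f + g) ≤ wnorm W f + wnorm W g := by
  unfold wnorm
  rw [← ENNReal.tsum_add]
  refine ENNReal.tsum_le_tsum fun α => ?_
  rw [← add_mul, map_add]
  gcongr
  exact enorm_add_le _ _

theorem wnorm_sub_comm (f g : Series σ) : wnorm W (f - g) = wnorm W (g - f) :=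
  tsum_congr fun α => by rw [map_sub, map_sub, enorm_sub_rev]

theorem wnorm_neg (f : Series σ) : wnorm W (-f) = wnorm W f := by
  simpa only [zero_sub, sub_zero] using wnorm_sub_comm (W := W) 0 f

theorem wnorm_smul (c : ℝ) (f : Series σ) : wnorm W (c • f) = ‖c‖ₑ * wnorm W f := by
  unfold wnorm
  rw [← ENNReal.tsum_mul_left]
  refine tsum_congr fun α => ?_
  rw [map_smul, smul_eq_mul, enorm_mul, mul_assoc]

theorem wnorm_sum_le (s : Finset ι) (f : ι → Series σ) :
    wnorm W (∑ i ∈ s, f i) ≤ ∑ i ∈ s, wnorm W (f i) :=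
  Finset.le_sum_of_subadditive (wnorm W) wnorm_zero.le wnorm_add_le s f

theorem wnorm_mono (h : ∀ α, W α ≤ W' α) (f : Series σ) : wnorm W f ≤ wnorm W' f :=
  ENNReal.tsum_le_tsum fun α => by gcongr; exact h α

theorem enorm_coeff_mul_le_wnorm (f : Series σ) (α : σ →₀ ℕ) : ‖coeff α f‖ₑ * W α ≤ wnorm W f :=
  ENNReal.le_tsum (f := fun α => ‖coeff α f‖ₑ * W α) α

theorem eq_zero_of_wnorm_eq_zero (hW : ∀ α, W α ≠ 0) {f : Series σ} (hf : wnorm W f = 0) :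
    f = 0 := by
  ext α
  simpa [hW α] using ENNReal.tsum_eq_zero.1 hf α

theorem tsum_mul_tsum_eq_tsum_sum_antidiagonal {A : Type*} [AddMonoid A]
    [Finset.HasAntidiagonal A] (a b : A → ℝ≥0∞) :
    (∑' α, a α) * ∑' β, b β = ∑' γ, ∑ x ∈ antidiagonal γ, a x.1 * b x.2 :=
  calc (∑' α, a α) * ∑' β, b β = ∑' x : A × A, a x.1 * b x.2 := by
        simp_rw [ENNReal.tsum_prod', ENNReal.tsum_mul_left, ENNReal.tsum_mul_right]
    _ = ∑' x : Σ γ : A, antidiagonal γ, a x.2.1.1 * b x.2.1.2 :=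
        (Finset.HasAntidiagonal.sigmaAntidiagonalEquivProd.tsum_eq
          fun x : A × A => a x.1 * b x.2).symm
    _ = ∑' γ, ∑ x ∈ antidiagonal γ, a x.1 * b x.2 := by
        rw [ENNReal.tsum_sigma']
        exact tsum_congr fun γ => (antidiagonal γ).tsum_subtype fun x => a x.1 * b x.2

theorem wnorm_mul_le (hW : ∀ α β, W (α + β) ≤ W α * W β) (f g : Series σ) :
    wnorm W (f * g) ≤ wnorm W f * wnorm W g := by
  classical
  unfold wnorm
  rw [tsum_mul_tsum_eq_tsum_sum_antidiagonal]
  refine ENNReal.tsum_le_tsum fun γ => ?_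
  rw [coeff_mul]
  calc ‖∑ x ∈ antidiagonal γ, coeff x.1 f * coeff x.2 g‖ₑ * W γ
    _ ≤ (∑ x ∈ antidiagonal γ, ‖coeff x.1 f * coeff x.2 g‖ₑ) * W γ := by
        gcongr
        exact enorm_sum_le _ _
    _ = ∑ x ∈ antidiagonal γ, ‖coeff x.1 f * coeff x.2 g‖ₑ * W γ := Finset.sum_mul _ _ _
    _ ≤ ∑ x ∈ antidiagonal γ, ‖coeff x.1 f‖ₑ * W x.1 * (‖coeff x.2 g‖ₑ * W x.2) := by
        refine Finset.sum_le_sum fun x hx => ?_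
        rw [← mem_antidiagonal.1 hx, enorm_mul, mul_mul_mul_comm]
        gcongr
        exact hW _ _

theorem wnorm_le_mul_wnorm_of_coeff {S : Type*} {e e' : S → σ →₀ ℕ} (he : Function.Injective e)
    (he' : Function.Injective e') {C : ℝ≥0∞} {f g : Series σ}
    (hg : ∀ α ∉ Set.range e, coeff α g = 0)
    (h : ∀ s, ‖coeff (e s) g‖ₑ * W (e s) ≤ C * (‖coeff (e' s) f‖ₑ * W' (e' s))) :
    wnorm W g ≤ C * wnorm W' f := by
  have hsupp : Function.support (fun α => ‖coeff α g‖ₑ * W α) ⊆ Set.range e := fun α hα => by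
    by_contra hn
    simp [hg α hn] at hα
  calc wnorm W g = ∑' s, ‖coeff (e s) g‖ₑ * W (e s) := (he.tsum_eq hsupp).symm
    _ ≤ ∑' s, C * (‖coeff (e' s) f‖ₑ * W' (e' s)) := ENNReal.tsum_le_tsum h
    _ = C * ∑' s, ‖coeff (e' s) f‖ₑ * W' (e' s) := ENNReal.tsum_mul_left
    _ ≤ C * wnorm W' f := by
      gcongr
      exact ENNReal.tsum_comp_le_tsum_of_injective he' fun α => ‖coeff α f‖ₑ * W' α

variable [Fintype ι]

/-- The sum of the weighted norms of the components of a vector of power series. -/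
def vnorm (W : (σ →₀ ℕ) → ℝ≥0∞) (y : ι → Series σ) : ℝ≥0∞ :=
  ∑ i, wnorm W (y i)

theorem vnorm_zero : vnorm W (0 : ι → Series σ) = 0 := by simp [vnorm, wnorm_zero]

theorem wnorm_le_vnorm (y : ι → Series σ) (i : ι) : wnorm W (y i) ≤ vnorm W y :=
  Finset.single_le_sum (f := fun i => wnorm W (y i)) (fun _ _ => zero_le) (Finset.mem_univ i)

theorem vnorm_add_le (y z : ι → Series σ) : vnorm W (y + z) ≤ vnorm W y + vnorm W z := by
  unfold vnorm
  rw [← Finset.sum_add_distrib]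
  exact Finset.sum_le_sum fun i _ => wnorm_add_le _ _

theorem vnorm_sub_comm (y z : ι → Series σ) : vnorm W (y - z) = vnorm W (z - y) :=
  Finset.sum_congr rfl fun _ _ => wnorm_sub_comm _ _

theorem eq_zero_of_vnorm_eq_zero (hW : ∀ α, W α ≠ 0) {y : ι → Series σ} (hy : vnorm W y = 0) :
    y = 0 :=
  funext fun i => eq_zero_of_wnorm_eq_zero hW (nonpos_iff_eq_zero.1 (hy ▸ wnorm_le_vnorm y i))

theorem vnorm_le_mul_vnorm {C : ℝ≥0∞} {y z : ι → Series σ}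
    (h : ∀ i, wnorm W (y i) ≤ C * wnorm W (z i)) : vnorm W y ≤ C * vnorm W z := by
  unfold vnorm
  rw [Finset.mul_sum]
  exact Finset.sum_le_sum fun i _ => h i

theorem wnorm_dotProduct_le (hW : ∀ α β, W (α + β) ≤ W α * W β) (u v : ι → Series σ) :
    wnorm W (u ⬝ᵥ v) ≤ vnorm W u * vnorm W v := by
  refine (wnorm_sum_le _ _).trans ?_
  unfold vnorm
  rw [Finset.sum_mul]
  refine Finset.sum_le_sum fun i _ => (wnorm_mul_le hW _ _).trans ?_
  gcongr
  exact wnorm_le_vnorm v i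

theorem vnorm_eq_tsum (y : ι → Series σ) :
    vnorm W y = ∑' α, ∑ i, ‖coeff α (y i)‖ₑ * W α :=
  (Summable.tsum_finsetSum fun _ _ => ENNReal.summable).symm

theorem exists_tendsto_coeff (hW : ∀ α, W α ≠ 0) (hW' : ∀ α, W α ≠ ∞) {y : ℕ → ι → Series σ}
    {B : ℕ → ℝ≥0∞} (hB : Filter.Tendsto B Filter.atTop (𝓝 0))
    (hy : ∀ N n m, N ≤ n → N ≤ m → vnorm W (y n - y m) ≤ B N) (i : ι) (α : σ →₀ ℕ) :
    ∃ c, Filter.Tendsto (fun n => coeff α (y n i)) Filter.atTop (𝓝 c) := by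
  refine cauchySeq_tendsto_of_complete (EMetric.cauchySeq_iff_le_tendsto_0.2
    ⟨fun N => B N / W α, fun n m N hn hm => ?_, ?_⟩)
  · rw [edist_eq_enorm_sub, ← map_sub, ENNReal.le_div_iff_mul_le (.inl (hW α)) (.inl (hW' α))]
    exact ((enorm_coeff_mul_le_wnorm _ _).trans (wnorm_le_vnorm _ i)).trans (hy N n m hn hm)
  · simpa using ENNReal.Tendsto.div_const hB (.inr (hW α))

theorem exists_vnorm_sub_le (hW : ∀ α, W α ≠ 0) (hW' : ∀ α, W α ≠ ∞) {y : ℕ → ι → Series σ}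
    {B : ℕ → ℝ≥0∞} (hB : Filter.Tendsto B Filter.atTop (𝓝 0))
    (hy : ∀ N n m, N ≤ n → N ≤ m → vnorm W (y n - y m) ≤ B N) :
    ∃ z : ι → Series σ, ∀ n, vnorm W (y n - z) ≤ B n := by
  choose c hc using exists_tendsto_coeff hW hW' hB hy
  refine ⟨c, fun n => ?_⟩
  rw [vnorm_eq_tsum]
  refine tsum_le_of_sum_le' zero_le fun s => ?_
  have hlim : Filter.Tendsto
      (fun m => ∑ α ∈ s, ∑ i, ‖coeff α (y n i) - coeff α (y m i)‖ₑ * W α) Filter.atTop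
      (𝓝 (∑ α ∈ s, ∑ i, ‖coeff α (y n i) - c i α‖ₑ * W α)) :=
    tendsto_finsetSum _ fun α _ => tendsto_finsetSum _ fun i _ =>
      ENNReal.Tendsto.mul_const (((hc i α).const_sub _).enorm) (.inr (hW' α))
  refine le_of_tendsto hlim (Filter.eventually_atTop.2 ⟨n, fun m hm => ?_⟩)
  calc ∑ α ∈ s, ∑ i, ‖coeff α (y n i) - coeff α (y m i)‖ₑ * W α
    _ ≤ ∑' α, ∑ i, ‖coeff α ((y n - y m) i)‖ₑ * W α := by
        simp_rw [Pi.sub_apply, map_sub]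
        exact ENNReal.sum_le_tsum s
    _ = vnorm W (y n - y m) := (vnorm_eq_tsum _).symm
    _ ≤ B n := hy n n m le_rfl hm

/-- The distance defined by a weighted norm, as an extended metric on vectors of power series:
the framework in which the contraction principle is applied. -/
abbrev weightedEMetricSpace (ι : Type*) [Fintype ι] (hW : ∀ α, W α ≠ 0) :
    EMetricSpace (ι → Series σ) where
  edist y z := vnorm W (y - z)
  edist_self y := by rw [sub_self, vnorm_zero]
  edist_comm := vnorm_sub_comm
  edist_triangle x y z := by
    rw [← sub_add_sub_cancel x y z]
    exact vnorm_add_le _ _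
  eq_of_edist_eq_zero h := sub_eq_zero.1 (eq_zero_of_vnorm_eq_zero hW h)

theorem completeSpace_weightedEMetricSpace (hW : ∀ α, W α ≠ 0) (hW' : ∀ α, W α ≠ ∞) :
    @CompleteSpace (ι → Series σ) (weightedEMetricSpace ι hW).toUniformSpace := by
  let _ := weightedEMetricSpace ι hW
  have hB : Filter.Tendsto (fun n : ℕ => (2⁻¹ : ℝ≥0∞) ^ n) Filter.atTop (𝓝 0) :=
    ENNReal.tendsto_pow_atTop_nhds_zero_of_lt_one (by simp)
  refine EMetric.complete_of_convergent_controlled_sequences (fun n => (2⁻¹ : ℝ≥0∞) ^ n)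
    (fun n => ENNReal.pow_pos (by simp) n) fun y hy => ?_
  obtain ⟨z, hz⟩ := exists_vnorm_sub_le hW hW' hB fun N n m hn hm => (hy N n m hn hm).le
  exact ⟨z, tendsto_iff_edist_tendsto_0.2 (tendsto_of_tendsto_of_tendsto_of_le_of_le
    tendsto_const_nhds hB (fun _ => zero_le) hz)⟩

theorem exists_fixedPoint (hW : ∀ α, W α ≠ 0) (hW' : ∀ α, W α ≠ ∞)
    (Φ : (ι → Series σ) → ι → Series σ) {c : ℝ≥0∞} (hc : c ≠ ∞) (h0 : vnorm W (Φ 0) ≤ c)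
    (hΦ : ∀ y z, vnorm W y ≤ 2 * c → vnorm W z ≤ 2 * c →
      vnorm W (Φ y - Φ z) ≤ 2⁻¹ * vnorm W (y - z)) :
    ∃ y, vnorm W y ≤ 2 * c ∧ Φ y = y := by
  let _ := weightedEMetricSpace ι hW
  have := completeSpace_weightedEMetricSpace (ι := ι) hW hW'
  have edist_zero : ∀ y : ι → Series σ, edist y 0 = vnorm W y := fun y =>
    congrArg (vnorm W) (sub_zero y)
  have mem_ball : ∀ y : ι → Series σ, y ∈ Metric.closedEBall 0 (2 * c) ↔ vnorm W y ≤ 2 * c :=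
    fun y => by rw [Metric.mem_closedEBall, edist_zero]
  have hmaps : Set.MapsTo Φ (Metric.closedEBall 0 (2 * c)) (Metric.closedEBall 0 (2 * c)) := by
    intro y hy
    rw [mem_ball] at hy ⊢
    calc vnorm W (Φ y) = vnorm W ((Φ y - Φ 0) + Φ 0) := by rw [sub_add_cancel]
      _ ≤ 2⁻¹ * vnorm W (y - 0) + c :=
          (vnorm_add_le _ _).trans (add_le_add (hΦ y 0 hy (by simp [vnorm_zero])) h0)
      _ ≤ 2⁻¹ * (2 * c) + c := by rw [sub_zero]; gcongr
      _ = 2 * c := by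
          rw [← mul_assoc, ENNReal.inv_mul_cancel two_ne_zero ENNReal.ofNat_ne_top]; ring
  have hcontr : ContractingWith 2⁻¹ (hmaps.restrict Φ _ _) := by
    refine ⟨NNReal.inv_lt_one_iff (by norm_num) |>.2 (by norm_num), fun y z => ?_⟩
    rw [ENNReal.coe_inv two_ne_zero]
    exact hΦ y z ((mem_ball _).1 y.2) ((mem_ball _).1 z.2)
  obtain ⟨y, hy, hfix, -⟩ := hcontr.exists_fixedPoint' Metric.isClosed_closedEBall.isComplete
    hmaps (x := 0) ((mem_ball 0).2 (by simp [vnorm_zero]))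
    (by rw [edist_comm, edist_zero]; exact ne_top_of_le_ne_top hc h0)
  exact ⟨y, (mem_ball y).1 hy, hfix⟩

theorem exists_quadratic_fixedPoint (hW : ∀ α, W α ≠ 0) (hW' : ∀ α, W α ≠ ∞) (b : ι → Series σ)
    (L : (ι → Series σ) →ₗ[ℝ] ι → Series σ)
    (Q : (ι → Series σ) →ₗ[ℝ] (ι → Series σ) →ₗ[ℝ] ι → Series σ) {q : ℝ≥0∞}
    (hL : ∀ y, vnorm W (L y) ≤ 4⁻¹ * vnorm W y)
    (hQ : ∀ y z, vnorm W (Q y z) ≤ q * vnorm W y * vnorm W z)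
    (hb : vnorm W b ≠ ∞) (hq : q * vnorm W b ≤ 16⁻¹) :
    ∃ y, vnorm W y ≤ 2 * vnorm W b ∧ y = b + L y + Q y y := by
  obtain ⟨y, hy, hfix⟩ := exists_fixedPoint hW hW' (fun y => b + L y + Q y y) hb (by simp)
    fun y z hy hz => by
      have hdiff : b + L y + Q y y - (b + L z + Q z z) =
          L (y - z) + (Q (y - z) y + Q z (y - z)) := by
        simp only [map_sub, LinearMap.sub_apply]; abel
      rw [hdiff]
      calc vnorm W (L (y - z) + (Q (y - z) y + Q z (y - z)))
        _ ≤ vnorm W (L (y - z)) + (vnorm W (Q (y - z) y) + vnorm W (Q z (y - z))) :=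
            (vnorm_add_le _ _).trans (by gcongr; exact vnorm_add_le _ _)
        _ ≤ 4⁻¹ * vnorm W (y - z) + (q * vnorm W (y - z) * (2 * vnorm W b) +
              q * (2 * vnorm W b) * vnorm W (y - z)) := by
            gcongr
            · exact hL _
            · exact (hQ _ _).trans (by gcongr)
            · exact (hQ _ _).trans (by gcongr)
        _ = (4⁻¹ + 4 * (q * vnorm W b)) * vnorm W (y - z) := by ring
        _ ≤ (4⁻¹ + 4 * 16⁻¹) * vnorm W (y - z) := by gcongr
        _ = 2⁻¹ * vnorm W (y - z) := by
            congr 1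
            rw [← ENNReal.toReal_eq_toReal_iff' (by finiteness) (by finiteness),
              ENNReal.toReal_add (by finiteness) (by finiteness)]
            norm_num [ENNReal.toReal_inv]
  exact ⟨y, hy, hfix.symm⟩

end WeightedNorm

/-! ### Formal differentiation, integration and restriction -/

section Operators

open Finsupp (single)

/-- Formal partial differentiation, as a linear operator. -/
def pd (i : σ) : Series σ →ₗ[ℝ] Series σ := (MvPowerSeries.pderiv ℝ i).toLinearMap

theorem coeff_pd (i : σ) (f : Series σ) (α : σ →₀ ℕ) :
    coeff α (pd i f) = coeff (α + single i 1) f * (α i + 1) :=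
  MvPowerSeries.coeff_pderiv f α

theorem pd_mul (i : σ) (f g : Series σ) : pd i (f * g) = pd i f * g + f * pd i g := by
  refine ((MvPowerSeries.pderiv ℝ i).leibniz f g).trans ?_
  rw [smul_eq_mul, smul_eq_mul, add_comm, mul_comm g]
  rfl

theorem pd_comm (i j : σ) (f : Series σ) : pd i (pd j f) = pd j (pd i f) := by
  ext α
  simp only [coeff_pd, add_right_comm α (single i 1) (single j 1)]
  rcases eq_or_ne i j with rfl | h
  · rfl
  · simp only [Finsupp.add_apply, Finsupp.single_eq_of_ne h, Finsupp.single_eq_of_ne h.symm,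
      add_zero]
    ring

/-- Formal integration in the direction `t`, vanishing on the hyperplane where the coordinate `t`
is zero. There `α t = 0`, and the division returns the coefficient `0`. -/
def integ (t : σ) : Series σ →ₗ[ℝ] Series σ where
  toFun f := fun α => coeff (α - single t 1) f / α t
  map_add' f g := by
    funext α
    change _ = (_ : ℝ) + _
    rw [map_add, add_div]
  map_smul' c f := by
    funext α
    change _ = c • (_ : ℝ)
    rw [map_smul, smul_eq_mul, smul_eq_mul, mul_div_assoc]

theorem coeff_integ (t : σ) (f : Series σ) (α : σ →₀ ℕ) :
    coeff α (integ t f) = coeff (α - single t 1) f / α t := rfl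

theorem coeff_integ_of_eq_zero {t : σ} {α : σ →₀ ℕ} (h : α t = 0) (f : Series σ) :
    coeff α (integ t f) = 0 := by
  simp [coeff_integ, h]

theorem coeff_add_single_integ (t : σ) (f : Series σ) (α : σ →₀ ℕ) :
    coeff (α + single t 1) (integ t f) = coeff α f / (α t + 1) := by
  simp [coeff_integ]

theorem exists_eq_add_single {t : σ} {α : σ →₀ ℕ} (h : α t ≠ 0) : ∃ β, β + single t 1 = α :=
  ⟨α - single t 1, tsub_add_cancel_of_le (Finsupp.single_le_iff.2 (Nat.one_le_iff_ne_zero.2 h))⟩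

theorem coeff_integ_of_notMem_range {t : σ} {α : σ →₀ ℕ}
    (h : α ∉ Set.range fun β : σ →₀ ℕ => β + single t 1) (f : Series σ) :
    coeff α (integ t f) = 0 :=
  coeff_integ_of_eq_zero (not_not.1 fun h0 => h (exists_eq_add_single h0)) f

theorem pd_integ_self (t : σ) (f : Series σ) : pd t (integ t f) = f := by
  ext α
  rw [coeff_pd, coeff_add_single_integ, div_mul_cancel₀]
  positivity

theorem pd_integ_comm {i t : σ} (h : i ≠ t) (f : Series σ) :
    pd i (integ t f) = integ t (pd i f) := by
  ext α
  rw [coeff_pd]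
  by_cases hα : α t = 0
  · rw [coeff_integ_of_eq_zero hα, coeff_integ_of_eq_zero, zero_mul]
    simp [hα, h.symm]
  · obtain ⟨β, rfl⟩ := exists_eq_add_single hα
    rw [add_right_comm, coeff_add_single_integ, coeff_add_single_integ, coeff_pd]
    simp only [Finsupp.add_apply, Finsupp.single_eq_of_ne h, Finsupp.single_eq_of_ne h.symm,
      add_zero]
    ring

/-- Restriction of a power series to the hyperplane where the coordinate `t` vanishes, the result
being regarded as a series in the same variables. -/
def restr (t : σ) : Series σ →ₐ[ℝ] Series σ :=
  AlgHom.ofLinearMap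
    { toFun f := fun α => if α t = 0 then coeff α f else 0
      map_add' f g := by
        funext α
        change (if α t = 0 then coeff α (f + g) else 0) =
          (if α t = 0 then coeff α f else 0) + (if α t = 0 then coeff α g else 0)
        split_ifs <;> simp
      map_smul' c f := by
        funext α
        change (if α t = 0 then coeff α (c • f) else 0) =
          c • (if α t = 0 then coeff α f else 0)
        split_ifs <;> simp }
    (by
      classical
      ext α
      change (if α t = 0 then coeff α 1 else 0) = coeff α (1 : Series σ)
      rw [MvPowerSeries.coeff_one]
      aesop)
    (fun f g => by
      classical
      ext α
      change (if α t = 0 then coeff α (f * g) else 0) = _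
      rw [coeff_mul, coeff_mul]
      split_ifs with h
      · refine Finset.sum_congr rfl fun p hp => ?_
        rw [← mem_antidiagonal.1 hp, Finsupp.add_apply, Nat.add_eq_zero_iff] at h
        change _ = (if p.1 t = 0 then _ else _) * (if p.2 t = 0 then _ else _)
        rw [if_pos h.1, if_pos h.2]
      · refine (Finset.sum_eq_zero fun p hp => ?_).symm
        rw [← mem_antidiagonal.1 hp, Finsupp.add_apply, Nat.add_eq_zero_iff, not_and_or] at h
        change (if p.1 t = 0 then _ else (0 : ℝ)) * (if p.2 t = 0 then _ else (0 : ℝ)) = 0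
        rcases h with h | h <;> simp [h])

theorem coeff_restr (t : σ) (f : Series σ) (α : σ →₀ ℕ) :
    coeff α (restr t f) = if α t = 0 then coeff α f else 0 := rfl

theorem restr_integ (t : σ) (f : Series σ) : restr t (integ t f) = 0 := by
  ext α
  rw [coeff_restr]
  split_ifs with h
  · rw [coeff_integ_of_eq_zero h, map_zero]
  · rw [map_zero]

theorem restr_restr (t : σ) (f : Series σ) : restr t (restr t f) = restr t f := by
  ext α
  simp only [coeff_restr]
  split_ifs <;> rfl

theorem pd_restr_self (t : σ) (f : Series σ) : pd t (restr t f) = 0 := by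
  ext α
  simp [coeff_pd, coeff_restr]

theorem pd_restr_comm {i t : σ} (h : i ≠ t) (f : Series σ) :
    pd i (restr t f) = restr t (pd i f) := by
  ext α
  simp [coeff_pd, coeff_restr, h.symm]

theorem constantCoeff_restr (t : σ) (f : Series σ) :
    constantCoeff (restr t f) = constantCoeff f := by
  rw [← MvPowerSeries.coeff_zero_eq_constantCoeff_apply,
    ← MvPowerSeries.coeff_zero_eq_constantCoeff_apply, coeff_restr,
    if_pos (Finsupp.zero_apply)]

theorem eq_zero_of_pd_eq_zero_of_restr_eq_zero {t : σ} {f : Series σ} (h : pd t f = 0)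
    (h0 : restr t f = 0) : f = 0 := by
  ext α
  by_cases hα : α t = 0
  · simpa [coeff_restr, hα] using congrArg (coeff α) h0
  · obtain ⟨β, rfl⟩ := exists_eq_add_single hα
    have hβ := congrArg (coeff β) h
    rw [coeff_pd, map_zero] at hβ
    exact (mul_eq_zero.1 hβ).resolve_right (by positivity)

end Operators

/-! ### Weights adapted to a direction -/

section Weights

open Finsupp (single)

/-- The weight `r ^ |α|`: the associated norm is finite for the series that converge absolutely on
the closed polydisc of radius `r`. -/
def radialWeight (r : ℝ≥0) (α : σ →₀ ℕ) : ℝ≥0∞ := (r : ℝ≥0∞) ^ α.degree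

/-- A weight adapted to the direction `t`. The binomial coefficient keeps it submultiplicative and
compensates the factors which the operators `f ↦ ∂ᵢ ∫ f dt` create on the coefficients. -/
def dirWeight (t : σ) (r ε : ℝ≥0) (α : σ →₀ ℕ) : ℝ≥0∞ :=
  (r : ℝ≥0∞) ^ α.degree * (ε : ℝ≥0∞) ^ α t * ((α.degree.choose (α t) : ℕ) : ℝ≥0∞)⁻¹

theorem radialWeight_add_le (r : ℝ≥0) (α β : σ →₀ ℕ) :
    radialWeight r (α + β) ≤ radialWeight r α * radialWeight r β := by
  simp [radialWeight, pow_add]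

theorem apply_add_apply_le_degree (α : σ →₀ ℕ) {i t : σ} (h : i ≠ t) :
    α i + α t ≤ α.degree := by
  classical
  calc α i + α t = (α.erase t) i + α t := by rw [Finsupp.erase_ne h]
    _ ≤ (α.erase t).degree + (single t (α t)).degree := by
        rw [Finsupp.degree_single]
        gcongr
        exact Finsupp.le_degree i _
    _ = α.degree := by rw [← map_add, Finsupp.erase_add_single]

theorem choose_degree_ne_zero (α : σ →₀ ℕ) (t : σ) : α.degree.choose (α t) ≠ 0 :=
  (Nat.choose_pos (Finsupp.le_degree t α)).ne'

theorem dirWeight_ne_zero (t : σ) {r ε : ℝ≥0} (hr : 0 < r) (hε : 0 < ε) (α : σ →₀ ℕ) :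
    dirWeight t r ε α ≠ 0 := by
  simp [dirWeight, hr.ne', hε.ne']

theorem dirWeight_ne_top (t : σ) (r ε : ℝ≥0) (α : σ →₀ ℕ) : dirWeight t r ε α ≠ ∞ :=
  ENNReal.mul_ne_top (by finiteness) (by simpa using choose_degree_ne_zero α t)

theorem choose_mul_choose_le (m n k l : ℕ) :
    m.choose k * n.choose l ≤ (m + n).choose (k + l) := by
  rw [Nat.add_choose_eq]
  exact Finset.single_le_sum (f := fun ij : ℕ × ℕ => m.choose ij.1 * n.choose ij.2)
    (fun _ _ => Nat.zero_le _) (a := (k, l)) (by simp)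

theorem dirWeight_add_le (t : σ) (r ε : ℝ≥0) (α β : σ →₀ ℕ) :
    dirWeight t r ε (α + β) ≤ dirWeight t r ε α * dirWeight t r ε β := by
  have hchoose : (((α + β).degree.choose ((α + β) t) : ℕ) : ℝ≥0∞)⁻¹ ≤
      ((α.degree.choose (α t) : ℕ) : ℝ≥0∞)⁻¹ * ((β.degree.choose (β t) : ℕ) : ℝ≥0∞)⁻¹ := by
    rw [← ENNReal.mul_inv (by simp) (by simp), ENNReal.inv_le_inv, map_add, Finsupp.add_apply]
    exact_mod_cast choose_mul_choose_le _ _ _ _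
  calc dirWeight t r ε (α + β)
    _ ≤ (r : ℝ≥0∞) ^ (α + β).degree * (ε : ℝ≥0∞) ^ (α + β) t *
        (((α.degree.choose (α t) : ℕ) : ℝ≥0∞)⁻¹ * ((β.degree.choose (β t) : ℕ) : ℝ≥0∞)⁻¹) := by
        unfold dirWeight
        gcongr
    _ = dirWeight t r ε α * dirWeight t r ε β := by
        rw [dirWeight, dirWeight, map_add, Finsupp.add_apply, pow_add, pow_add]; ring

theorem dirWeight_le_radialWeight (t : σ) (r : ℝ≥0) {ε : ℝ≥0} (hε : ε ≤ 1) (α : σ →₀ ℕ) :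
    dirWeight t r ε α ≤ radialWeight r α := by
  have hpow : (ε : ℝ≥0∞) ^ α t ≤ 1 := pow_le_one₀ zero_le (by exact_mod_cast hε)
  have hchoose : ((α.degree.choose (α t) : ℕ) : ℝ≥0∞)⁻¹ ≤ 1 := by
    rw [ENNReal.inv_le_one]
    exact_mod_cast Nat.one_le_iff_ne_zero.2 (choose_degree_ne_zero α t)
  calc dirWeight t r ε α ≤ (r : ℝ≥0∞) ^ α.degree * 1 * 1 := by unfold dirWeight; gcongr
    _ = radialWeight r α := by rw [mul_one, mul_one, radialWeight]

theorem radialWeight_le_dirWeight (t : σ) (r : ℝ≥0) {ε : ℝ≥0} (hε : ε ≤ 1) (α : σ →₀ ℕ) :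
    radialWeight (r * ε / 2) α ≤ dirWeight t r ε α := by
  have hpow : (ε : ℝ≥0∞) ^ α.degree ≤ (ε : ℝ≥0∞) ^ α t :=
    pow_le_pow_right_of_le_one' (by exact_mod_cast hε) (Finsupp.le_degree t α)
  have hchoose : (2⁻¹ : ℝ≥0∞) ^ α.degree ≤ ((α.degree.choose (α t) : ℕ) : ℝ≥0∞)⁻¹ := by
    rw [← ENNReal.inv_pow, ENNReal.inv_le_inv]
    exact_mod_cast Nat.choose_le_two_pow _ _
  calc radialWeight (r * ε / 2) α
    _ = (r : ℝ≥0∞) ^ α.degree * (ε : ℝ≥0∞) ^ α.degree * (2⁻¹ : ℝ≥0∞) ^ α.degree := by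
        rw [← mul_pow, ← mul_pow, radialWeight, div_eq_mul_inv]
        push_cast
        rfl
    _ ≤ dirWeight t r ε α := by unfold dirWeight; gcongr

theorem wnorm_integ_le {W : (σ →₀ ℕ) → ℝ≥0∞} (hW : ∀ α β, W (α + β) ≤ W α * W β)
    (t : σ) (f : Series σ) : wnorm W (integ t f) ≤ W (single t 1) * wnorm W f := by
  refine wnorm_le_mul_wnorm_of_coeff (e := fun α => α + single t 1) (e' := id)
    (add_left_injective _) Function.injective_id
    (fun α hα => coeff_integ_of_notMem_range hα f) fun α => ?_
  rw [coeff_add_single_integ, id]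
  calc ‖coeff α f / (α t + 1)‖ₑ * W (α + single t 1)
    _ ≤ ‖coeff α f‖ₑ * (W α * W (single t 1)) := by
        gcongr
        · rw [enorm_le_iff_norm_le, norm_div]
          refine div_le_self (norm_nonneg _) ?_
          rw [Real.norm_of_nonneg (by positivity)]
          exact le_add_of_nonneg_left (Nat.cast_nonneg _)
        · exact hW _ _
    _ = W (single t 1) * (‖coeff α f‖ₑ * W α) := by ring

theorem div_mul_inv_choose_succ_le {a k n : ℕ} (h : a + k ≤ n) :
    ((a + 1 : ℕ) : ℝ≥0∞) / (k + 1 : ℕ) * ((n + 1).choose (k + 1) : ℝ≥0∞)⁻¹ ≤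
      ((n + 1).choose k : ℝ≥0∞)⁻¹ := by
  have hpos : 0 < (n + 1).choose k := Nat.choose_pos (by omega)
  rw [div_eq_mul_inv, mul_assoc, ← ENNReal.mul_inv (by simp) (by simp), ← div_eq_mul_inv]
  refine ENNReal.div_le_of_le_mul ?_
  have hsucc : (((k + 1) * (n + 1).choose (k + 1) : ℕ) : ℝ≥0∞) =
      (n + 1).choose k * ((n + 1 - k : ℕ) : ℝ≥0∞) := by
    rw [mul_comm, Nat.choose_succ_right_eq, Nat.cast_mul]
  rw [← Nat.cast_mul, hsucc, ← mul_assoc, ENNReal.inv_mul_cancel (by exact_mod_cast hpos.ne')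
    (by simp), one_mul]
  exact_mod_cast (show a + 1 ≤ n + 1 - k by omega)

theorem enorm_natCast_add_one (m : ℕ) : ‖(m : ℝ) + 1‖ₑ = ((m + 1 : ℕ) : ℝ≥0∞) := by
  rw [← Nat.cast_succ, Real.enorm_natCast]

theorem wnorm_pd_integ_le {i t : σ} (hit : i ≠ t) (r ε : ℝ≥0) (f : Series σ) :
    wnorm (dirWeight t r ε) (pd i (integ t f)) ≤ ε * wnorm (dirWeight t r ε) f := by
  rw [pd_integ_comm hit]
  refine wnorm_le_mul_wnorm_of_coeff (e := fun α => α + single t 1)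
    (e' := fun α => α + single i 1) (add_left_injective _) (add_left_injective _)
    (fun α hα => coeff_integ_of_notMem_range hα _) fun α => ?_
  rw [coeff_add_single_integ, coeff_pd, mul_div_assoc, enorm_mul, div_eq_mul_inv, enorm_mul,
    enorm_inv (by positivity), enorm_natCast_add_one, enorm_natCast_add_one, ← div_eq_mul_inv]
  simp only [dirWeight, map_add, Finsupp.degree_single, Finsupp.add_apply, Finsupp.single_eq_same,
    Finsupp.single_eq_of_ne hit.symm, add_zero]
  set a := coeff (α + single i 1) f
  set n := α.degree
  set k := α t
  calc ‖a‖ₑ * (((α i + 1 : ℕ) : ℝ≥0∞) / (k + 1 : ℕ)) *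
        ((r : ℝ≥0∞) ^ (n + 1) * (ε : ℝ≥0∞) ^ (k + 1) * ((n + 1).choose (k + 1) : ℝ≥0∞)⁻¹)
    _ = ‖a‖ₑ * (r : ℝ≥0∞) ^ (n + 1) * (ε : ℝ≥0∞) ^ (k + 1) *
        (((α i + 1 : ℕ) : ℝ≥0∞) / (k + 1 : ℕ) * ((n + 1).choose (k + 1) : ℝ≥0∞)⁻¹) := by ring
    _ ≤ ‖a‖ₑ * (r : ℝ≥0∞) ^ (n + 1) * (ε : ℝ≥0∞) ^ (k + 1) *
        ((n + 1).choose k : ℝ≥0∞)⁻¹ := by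
        gcongr
        exact div_mul_inv_choose_succ_le (apply_add_apply_le_degree α hit)
    _ = ε * (‖a‖ₑ * ((r : ℝ≥0∞) ^ (n + 1) * (ε : ℝ≥0∞) ^ k *
        ((n + 1).choose k : ℝ≥0∞)⁻¹)) := by rw [pow_succ (ε : ℝ≥0∞)]; ring

/-- The operators which are small in the norms adapted to the direction `t` when `ε` is small. They
play the role of the integral operators in Picard's method. -/
def IsSmoothing (t : σ) (T : Series σ →ₗ[ℝ] Series σ) : Prop :=
  ∀ ⦃r ε : ℝ≥0⦄, r ≤ 1 → ε ≤ 1 → ∀ f,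
    wnorm (dirWeight t r ε) (T f) ≤ ε * wnorm (dirWeight t r ε) f

theorem isSmoothing_integ (t : σ) : IsSmoothing t (integ t) := fun r ε hr _ f => by
  refine (wnorm_integ_le (dirWeight_add_le t r ε) t f).trans ?_
  have hsingle : dirWeight t r ε (single t 1) = r * ε := by simp [dirWeight]
  rw [hsingle]
  gcongr
  exact mul_le_of_le_one_left zero_le (by exact_mod_cast hr)

theorem isSmoothing_pd_comp_integ {i t : σ} (hit : i ≠ t) : IsSmoothing t (pd i ∘ₗ integ t) :=
  fun r ε _ _ f => wnorm_pd_integ_le hit r ε f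

theorem IsSmoothing.comp {t : σ} {S T : Series σ →ₗ[ℝ] Series σ} (hS : IsSmoothing t S)
    (hT : IsSmoothing t T) : IsSmoothing t (S ∘ₗ T) := fun r ε hr hε f => by
  refine (hS hr hε (T f)).trans ?_
  gcongr
  exact (hT hr hε f).trans (mul_le_of_le_one_left zero_le (by exact_mod_cast hε))

end Weights

/-! ### Convergent power series -/

section Convergent

open Finsupp (single)

theorem radialWeight_mono {r s : ℝ≥0} (h : r ≤ s) (α : σ →₀ ℕ) :
    radialWeight r α ≤ radialWeight s α := by
  unfold radialWeight
  gcongr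

theorem radialWeight_ne_zero {r : ℝ≥0} (hr : 0 < r) (α : σ →₀ ℕ) : radialWeight r α ≠ 0 := by
  simp [radialWeight, hr.ne']

theorem radialWeight_ne_top (r : ℝ≥0) (α : σ →₀ ℕ) : radialWeight r α ≠ ∞ := by
  unfold radialWeight
  finiteness

theorem wnorm_monomial (W : (σ →₀ ℕ) → ℝ≥0∞) (α : σ →₀ ℕ) (c : ℝ) :
    wnorm W (MvPowerSeries.monomial α c) = ‖c‖ₑ * W α := by
  classical
  unfold wnorm
  rw [tsum_eq_single α fun β hβ => by rw [MvPowerSeries.coeff_monomial, if_neg hβ]; simp,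
    MvPowerSeries.coeff_monomial_same]

/-- The algebra of power series that converge absolutely on some polydisc, expressed as finiteness
of the norms of all sufficiently small radii. -/
def convergent (σ : Type*) : Subalgebra ℝ (Series σ) where
  carrier := {f | ∀ᶠ r in 𝓝[>] (0 : ℝ≥0), wnorm (radialWeight r) f ≠ ∞}
  mul_mem' {f g} hf hg := by
    rw [Set.mem_ofPred_eq] at hf hg ⊢
    filter_upwards [hf, hg] with r hrf hrg
    exact ne_top_of_le_ne_top (ENNReal.mul_ne_top hrf hrg)
      (wnorm_mul_le (radialWeight_add_le r) f g)
  add_mem' {f g} hf hg := by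
    rw [Set.mem_ofPred_eq] at hf hg ⊢
    filter_upwards [hf, hg] with r hrf hrg
    exact ne_top_of_le_ne_top (ENNReal.add_ne_top.2 ⟨hrf, hrg⟩) (wnorm_add_le f g)
  algebraMap_mem' c := by
    refine Filter.Eventually.of_forall (f := 𝓝[>] (0 : ℝ≥0)) fun r => ?_
    rw [MvPowerSeries.algebraMap_apply, ← MvPowerSeries.monomial_zero_eq_C_apply, wnorm_monomial]
    exact ENNReal.mul_ne_top enorm_ne_top (radialWeight_ne_top r 0)

theorem mem_convergent_iff {f : Series σ} :
    f ∈ convergent σ ↔ ∀ᶠ r in 𝓝[>] (0 : ℝ≥0), wnorm (radialWeight r) f ≠ ∞ := Iff.rfl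

theorem mem_convergent_of_wnorm_ne_top {r : ℝ≥0} (hr : 0 < r) {f : Series σ}
    (hf : wnorm (radialWeight r) f ≠ ∞) : f ∈ convergent σ := by
  rw [mem_convergent_iff]
  filter_upwards [Ioc_mem_nhdsGT hr] with s hs
  exact ne_top_of_le_ne_top hf (wnorm_mono (radialWeight_mono hs.2) f)

theorem exists_wnorm_ne_top {f : Series σ} (hf : f ∈ convergent σ) :
    ∃ r : ℝ≥0, 0 < r ∧ wnorm (radialWeight r) f ≠ ∞ := by
  obtain ⟨r, hr, hr0⟩ := ((mem_convergent_iff.1 hf).and self_mem_nhdsWithin).exists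
  exact ⟨r, hr0, hr⟩

theorem mem_convergent_of_wnorm_dirWeight_ne_top {t : σ} {r ε : ℝ≥0} (hr : 0 < r) (hε : 0 < ε)
    (hε' : ε ≤ 1) {f : Series σ} (hf : wnorm (dirWeight t r ε) f ≠ ∞) : f ∈ convergent σ :=
  mem_convergent_of_wnorm_ne_top (r := r * ε / 2) (by positivity)
    (ne_top_of_le_ne_top hf (wnorm_mono (radialWeight_le_dirWeight t r hε') f))

theorem C_mem_convergent (c : ℝ) : MvPowerSeries.C c ∈ convergent σ :=
  (convergent σ).algebraMap_mem c

theorem X_mem_convergent (i : σ) : MvPowerSeries.X i ∈ convergent σ :=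
  mem_convergent_of_wnorm_ne_top one_pos (by
    rw [MvPowerSeries.X, wnorm_monomial]
    exact ENNReal.mul_ne_top enorm_ne_top (radialWeight_ne_top _ _))

theorem dotProduct_mem_convergent [Fintype ι] {u v : ι → Series σ} (hu : ∀ a, u a ∈ convergent σ)
    (hv : ∀ a, v a ∈ convergent σ) : u ⬝ᵥ v ∈ convergent σ :=
  sum_mem fun a _ => mul_mem (hu a) (hv a)

theorem integ_mem_convergent (t : σ) {f : Series σ} (hf : f ∈ convergent σ) :
    integ t f ∈ convergent σ := by
  rw [mem_convergent_iff] at hf ⊢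
  filter_upwards [hf] with r hr
  exact ne_top_of_le_ne_top (ENNReal.mul_ne_top (radialWeight_ne_top _ _) hr)
    (wnorm_integ_le (radialWeight_add_le r) t f)

theorem restr_mem_convergent (t : σ) {f : Series σ} (hf : f ∈ convergent σ) :
    restr t f ∈ convergent σ := by
  rw [mem_convergent_iff] at hf ⊢
  filter_upwards [hf] with r hr
  refine ne_top_of_le_ne_top hr (ENNReal.tsum_le_tsum fun α => ?_)
  rw [coeff_restr]
  split_ifs <;> simp

theorem wnorm_pd_le {r : ℝ≥0} (hr : 0 < r) (i : σ) (f : Series σ) :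
    wnorm (radialWeight (r / 2)) (pd i f) ≤ (r : ℝ≥0∞)⁻¹ * wnorm (radialWeight r) f := by
  refine wnorm_le_mul_wnorm_of_coeff (e := id) (e' := fun α => α + single i 1)
    Function.injective_id (add_left_injective _) (by simp) fun α => ?_
  have hfactor : ‖(α i : ℝ) + 1‖ₑ ≤ 2 ^ α.degree := by
    rw [enorm_natCast_add_one]
    exact_mod_cast (Nat.succ_le_succ (Finsupp.le_degree i α)).trans Nat.lt_two_pow_self
  have hhalf : (2 : ℝ≥0∞) ^ α.degree * ((r / 2 : ℝ≥0) : ℝ≥0∞) ^ α.degree =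
      (r : ℝ≥0∞) ^ α.degree := by
    rw [← mul_pow, ENNReal.coe_div two_ne_zero, ENNReal.coe_ofNat,
      ENNReal.mul_div_cancel two_ne_zero ENNReal.ofNat_ne_top]
  have hcancel : (r : ℝ≥0∞)⁻¹ * r = 1 :=
    ENNReal.inv_mul_cancel (by exact_mod_cast hr.ne') ENNReal.coe_ne_top
  simp only [id, coeff_pd, enorm_mul, radialWeight, map_add, Finsupp.degree_single, pow_succ]
  calc ‖coeff (α + single i 1) f‖ₑ * ‖(α i : ℝ) + 1‖ₑ * ((r / 2 : ℝ≥0) : ℝ≥0∞) ^ α.degree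
    _ ≤ ‖coeff (α + single i 1) f‖ₑ * 2 ^ α.degree * ((r / 2 : ℝ≥0) : ℝ≥0∞) ^ α.degree := by
        gcongr
    _ = ‖coeff (α + single i 1) f‖ₑ * (r : ℝ≥0∞) ^ α.degree * ((r : ℝ≥0∞)⁻¹ * r) := by
        rw [mul_assoc, hhalf, hcancel, mul_one]
    _ = (r : ℝ≥0∞)⁻¹ * (‖coeff (α + single i 1) f‖ₑ * ((r : ℝ≥0∞) ^ α.degree * r)) := by ring

theorem pd_mem_convergent (i : σ) {f : Series σ} (hf : f ∈ convergent σ) :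
    pd i f ∈ convergent σ := by
  obtain ⟨r, hr, hfin⟩ := exists_wnorm_ne_top hf
  exact mem_convergent_of_wnorm_ne_top (half_pos hr) (ne_top_of_le_ne_top
    (ENNReal.mul_ne_top (by simpa using hr.ne') hfin) (wnorm_pd_le hr i f))

theorem wnorm_radialWeight_mul_le {f : Series σ} (h0 : constantCoeff f = 0) (r : ℝ≥0) {s : ℝ≥0}
    (hs : s ≤ 1) : wnorm (radialWeight (s * r)) f ≤ s * wnorm (radialWeight r) f := by
  refine wnorm_le_mul_wnorm_of_coeff (e := id) (e' := id) Function.injective_id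
    Function.injective_id (by simp) fun α => ?_
  rcases eq_or_ne α 0 with rfl | hα
  · simp [h0]
  · have hpow : (s : ℝ≥0∞) ^ α.degree ≤ s :=
      pow_le_of_le_one zero_le (by exact_mod_cast hs) (by rwa [Ne, Finsupp.degree_eq_zero_iff])
    simp only [radialWeight, id, ENNReal.coe_mul, mul_pow]
    calc ‖coeff α f‖ₑ * ((s : ℝ≥0∞) ^ α.degree * (r : ℝ≥0∞) ^ α.degree)
      _ ≤ ‖coeff α f‖ₑ * (s * (r : ℝ≥0∞) ^ α.degree) := by gcongr
      _ = s * (‖coeff α f‖ₑ * (r : ℝ≥0∞) ^ α.degree) := by ring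

theorem eventually_mul_le {X : Type*} {l : Filter X} {f : X → ℝ≥0∞}
    (hf : Filter.Tendsto f l (𝓝 0)) {B c : ℝ≥0∞} (hB : B ≠ ∞) (hc : c ≠ 0) :
    ∀ᶠ x in l, f x * B ≤ c := by
  have hlim := ENNReal.Tendsto.mul_const (b := B) hf (.inr hB)
  rw [zero_mul] at hlim
  exact ENNReal.tendsto_nhds_zero.1 hlim c (pos_iff_ne_zero.2 hc)

theorem tendsto_coe_nhdsGT_zero :
    Filter.Tendsto (fun ε : ℝ≥0 => (ε : ℝ≥0∞)) (𝓝[>] 0) (𝓝 0) :=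
  (ENNReal.tendsto_coe.2 Filter.tendsto_id).mono_left nhdsWithin_le_nhds

theorem eventually_wnorm_le {f : Series σ} (hf : f ∈ convergent σ) (h0 : constantCoeff f = 0)
    {δ : ℝ≥0∞} (hδ : δ ≠ 0) : ∀ᶠ r in 𝓝[>] (0 : ℝ≥0), wnorm (radialWeight r) f ≤ δ := by
  obtain ⟨r, hr, hfin⟩ := exists_wnorm_ne_top hf
  obtain ⟨s, hsδ, hs0, hs1⟩ :=
    ((eventually_mul_le tendsto_coe_nhdsGT_zero hfin hδ).and (Ioc_mem_nhdsGT one_pos)).exists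
  filter_upwards [Ioc_mem_nhdsGT (mul_pos hs0 hr)] with x hx
  calc wnorm (radialWeight x) f ≤ wnorm (radialWeight (s * r)) f :=
        wnorm_mono (radialWeight_mono hx.2) f
    _ ≤ s * wnorm (radialWeight r) f := wnorm_radialWeight_mul_le h0 r hs1
    _ ≤ δ := hsδ

theorem tendsto_wnorm_zero {f : Series σ} (hf : f ∈ convergent σ) (h0 : constantCoeff f = 0) :
    Filter.Tendsto (fun r : ℝ≥0 => wnorm (radialWeight r) f) (𝓝[>] 0) (𝓝 0) :=
  ENNReal.tendsto_nhds_zero.2 fun _ hδ => eventually_wnorm_le hf h0 hδ.ne'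

variable [Fintype ι] {W W' : (σ →₀ ℕ) → ℝ≥0∞}

theorem vnorm_mono (h : ∀ α, W α ≤ W' α) (y : ι → Series σ) : vnorm W y ≤ vnorm W' y :=
  Finset.sum_le_sum fun i _ => wnorm_mono h (y i)

theorem eventually_vnorm_ne_top {y : ι → Series σ} (hy : ∀ i, y i ∈ convergent σ) :
    ∀ᶠ r in 𝓝[>] (0 : ℝ≥0), vnorm (radialWeight r) y ≠ ∞ := by
  filter_upwards [Filter.eventually_all.2 hy] with r hr
  exact ENNReal.sum_ne_top.2 fun i _ => hr i

theorem tendsto_vnorm_zero {y : ι → Series σ} (hy : ∀ i, y i ∈ convergent σ)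
    (h0 : ∀ i, constantCoeff (y i) = 0) :
    Filter.Tendsto (fun r : ℝ≥0 => vnorm (radialWeight r) y) (𝓝[>] 0) (𝓝 0) := by
  simpa [vnorm] using tendsto_finsetSum Finset.univ fun i _ => tendsto_wnorm_zero (hy i) (h0 i)

end Convergent

/-! ### Quadratic perturbations of a surjective linear system -/

section QuadraticSystem

variable {κ : Type*} [Fintype κ] {W : (σ →₀ ℕ) → ℝ≥0∞}

/-- Multiplication of vectors of power series by a constant matrix. -/
def constMulVec (S : Matrix ι κ ℝ) : (κ → Series σ) →ₗ[ℝ] ι → Series σ :=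
  (S.map MvPowerSeries.C).mulVecLin.restrictScalars ℝ

theorem constMulVec_one [DecidableEq κ] (y : κ → Series σ) :
    constMulVec (1 : Matrix κ κ ℝ) y = y := by
  change (1 : Matrix κ κ ℝ).map MvPowerSeries.C *ᵥ y = y
  rw [Matrix.map_one _ (map_zero _) (map_one _), Matrix.one_mulVec]

theorem vnorm_le_sum_mul {y : κ → Series σ} {l : κ → ℝ≥0∞} {c : ℝ≥0∞}
    (h : ∀ k, wnorm W (y k) ≤ l k * c) : vnorm W y ≤ (∑ k, l k) * c := by
  rw [Finset.sum_mul]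
  exact Finset.sum_le_sum fun k _ => h k

variable [Fintype ι]

theorem constMulVec_constMulVec {μ : Type*} (A : Matrix μ ι ℝ)
    (S : Matrix ι κ ℝ) (y : κ → Series σ) :
    constMulVec A (constMulVec S y) = constMulVec (A * S) y :=
  (Matrix.mulVec_mulVec y _ _).trans (by rw [← Matrix.map_mul]; rfl)

theorem vnorm_constMulVec_le (S : Matrix ι κ ℝ) (y : κ → Series σ) :
    vnorm W (constMulVec S y) ≤ (∑ a, ∑ k, ‖S a k‖ₑ) * vnorm W y := by
  rw [Finset.sum_mul]
  refine Finset.sum_le_sum fun a _ => (wnorm_sum_le _ _).trans ?_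
  rw [Finset.sum_mul]
  refine Finset.sum_le_sum fun k _ => ?_
  change wnorm W (MvPowerSeries.C (S a k) * y k) ≤ ‖S a k‖ₑ * vnorm W y
  rw [← MvPowerSeries.smul_eq_C_mul, wnorm_smul]
  gcongr
  exact wnorm_le_vnorm y k

theorem sum_enorm_ne_top (S : Matrix ι κ ℝ) : ∑ a, ∑ k, ‖S a k‖ₑ ≠ ∞ :=
  ENNReal.sum_ne_top.2 fun _ _ => ENNReal.sum_ne_top.2 fun _ _ => enorm_ne_top

theorem exists_quadratic_system [DecidableEq κ] (hW : ∀ α, W α ≠ 0) (hW' : ∀ α, W α ≠ ∞)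
    {A : Matrix κ ι ℝ} {S : Matrix ι κ ℝ} (hS : A * S = 1) (b : κ → Series σ)
    (L : κ → (ι → Series σ) →ₗ[ℝ] Series σ)
    (Q : κ → (ι → Series σ) →ₗ[ℝ] (ι → Series σ) →ₗ[ℝ] Series σ) {l q : κ → ℝ≥0∞}
    (hL : ∀ k y, wnorm W (L k y) ≤ l k * vnorm W y)
    (hQ : ∀ k y z, wnorm W (Q k y z) ≤ q k * (vnorm W y * vnorm W z))
    (hl : (∑ k, l k) * (∑ a, ∑ k, ‖S a k‖ₑ) ≤ 4⁻¹) (hb : vnorm W b ≠ ∞)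
    (hq : (∑ k, q k) * (∑ a, ∑ k, ‖S a k‖ₑ) ^ 2 * vnorm W b ≤ 16⁻¹) :
    ∃ w : ι → Series σ, vnorm W w ≠ ∞ ∧ ∀ k, constMulVec A w k = b k + L k w + Q k w w := by
  set N := ∑ a, ∑ k, ‖S a k‖ₑ
  obtain ⟨y, hy, hfix⟩ := exists_quadratic_fixedPoint hW hW' b
    (LinearMap.pi L ∘ₗ constMulVec S)
    (LinearMap.mk₂ ℝ (fun y z k => Q k (constMulVec S y) (constMulVec S z))
      (fun _ _ _ => funext fun k => by simp only [map_add, LinearMap.add_apply, Pi.add_apply])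
      (fun _ _ _ => funext fun k => by simp only [map_smul, LinearMap.smul_apply, Pi.smul_apply])
      (fun _ _ _ => funext fun k => by simp only [map_add, Pi.add_apply])
      (fun _ _ _ => funext fun k => by simp only [map_smul, Pi.smul_apply]))
    (q := (∑ k, q k) * N ^ 2)
    (fun y => calc
      vnorm W (fun k => L k (constMulVec S y)) ≤ (∑ k, l k) * vnorm W (constMulVec S y) :=
        vnorm_le_sum_mul fun k => hL k _
      _ ≤ (∑ k, l k) * (N * vnorm W y) := by gcongr; exact vnorm_constMulVec_le S y
      _ ≤ 4⁻¹ * vnorm W y := by rw [← mul_assoc]; gcongr)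
    (fun y z => calc
      vnorm W (fun k => Q k (constMulVec S y) (constMulVec S z))
        ≤ (∑ k, q k) * (vnorm W (constMulVec S y) * vnorm W (constMulVec S z)) :=
        vnorm_le_sum_mul fun k => hQ k _ _
      _ ≤ (∑ k, q k) * ((N * vnorm W y) * (N * vnorm W z)) := by
        gcongr <;> exact vnorm_constMulVec_le S _
      _ = (∑ k, q k) * N ^ 2 * vnorm W y * vnorm W z := by ring)
    hb hq
  refine ⟨constMulVec S y, ne_top_of_le_ne_top (ENNReal.mul_ne_top (sum_enorm_ne_top S) ?_)
    (vnorm_constMulVec_le S y), fun k => ?_⟩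
  · exact ne_top_of_le_ne_top (ENNReal.mul_ne_top ENNReal.ofNat_ne_top hb) hy
  · rw [constMulVec_constMulVec, hS, constMulVec_one]
    exact congrFun hfix k

end QuadraticSystem

section Solvability

variable {κ : Type*}

/-- The constant part of a matrix of power series minus the matrix itself. -/
def constDefect (A : Matrix κ ι (Series σ)) : Matrix κ ι (Series σ) :=
  (A.map constantCoeff).map MvPowerSeries.C - A

theorem constDefect_mem_convergent {A : Matrix κ ι (Series σ)}
    (hA : ∀ k i, A k i ∈ convergent σ) (k : κ) (i : ι) : constDefect A k i ∈ convergent σ :=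
  sub_mem (C_mem_convergent _) (hA k i)

theorem constantCoeff_constDefect (A : Matrix κ ι (Series σ)) (k : κ) (i : ι) :
    constantCoeff (constDefect A k i) = 0 := by
  simp [constDefect]

variable [Fintype ι]

theorem constDefect_dotProduct (A : Matrix κ ι (Series σ)) (k : κ) (w : ι → Series σ) :
    constDefect A k ⬝ᵥ w = constMulVec (A.map constantCoeff) w k - A k ⬝ᵥ w :=
  sub_dotProduct _ _ _

/-- The dot product of vectors of power series, as a bilinear map over the reals. -/
abbrev dotBilin (σ ι : Type*) [Fintype ι] :
    (ι → Series σ) →ₗ[ℝ] (ι → Series σ) →ₗ[ℝ] Series σ := dotProductBilin ℝ ℝ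

theorem tendsto_sum_vnorm_zero [Fintype κ] {D : Matrix κ ι (Series σ)}
    (hD : ∀ k i, D k i ∈ convergent σ) (hD0 : ∀ k i, constantCoeff (D k i) = 0) :
    Filter.Tendsto (fun r : ℝ≥0 => ∑ k, vnorm (radialWeight r) (D k)) (𝓝[>] 0) (𝓝 0) := by
  simpa only [Finset.sum_const_zero] using
    tendsto_finsetSum Finset.univ fun k _ => tendsto_vnorm_zero (hD k) (hD0 k)

theorem exists_convergent_quadratic_solution [Finite κ] {A : Matrix κ ι ℝ}
    (hA : Function.Surjective A.mulVec) {b : κ → Series σ} (hb : ∀ k, b k ∈ convergent σ)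
    (hb0 : ∀ k, constantCoeff (b k) = 0) {D : Matrix κ ι (Series σ)}
    (hD : ∀ k i, D k i ∈ convergent σ) (hD0 : ∀ k i, constantCoeff (D k i) = 0) (c : κ → ℝ) :
    ∃ w : ι → Series σ, (∀ i, w i ∈ convergent σ) ∧
      ∀ k, constMulVec A w k = b k + D k ⬝ᵥ w + c k • (w ⬝ᵥ w) := by
  classical
  cases nonempty_fintype κ
  obtain ⟨S, hS⟩ := Matrix.mulVec_surjective_iff_exists_right_inverse.1 hA
  set N := ∑ i, ∑ k, ‖S i k‖ₑ
  have hN : N ≠ ∞ := sum_enorm_ne_top S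
  have hcN : (∑ k, ‖c k‖ₑ) * N ^ 2 ≠ ∞ :=
    ENNReal.mul_ne_top (ENNReal.sum_ne_top.2 fun _ _ => enorm_ne_top) (by finiteness)
  obtain ⟨r, hrD, hrb, hrb', hr⟩ :=
    ((eventually_mul_le (tendsto_sum_vnorm_zero hD hD0) hN (c := 4⁻¹) (by simp)).and
      ((eventually_mul_le (tendsto_vnorm_zero hb hb0) hcN (c := 16⁻¹) (by simp)).and
        ((eventually_vnorm_ne_top hb).and self_mem_nhdsWithin))).exists
  obtain ⟨w, hw, hsol⟩ := exists_quadratic_system (radialWeight_ne_zero hr) (radialWeight_ne_top r)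
    hS b (fun k => dotBilin σ ι (D k)) (fun k => c k • dotBilin σ ι)
    (l := fun k => vnorm (radialWeight r) (D k)) (q := fun k => ‖c k‖ₑ)
    (fun k y => wnorm_dotProduct_le (radialWeight_add_le r) (D k) y)
    (fun k y z => (wnorm_smul _ _).trans_le
      (by gcongr; exact wnorm_dotProduct_le (radialWeight_add_le r) y z))
    hrD hrb' (by rwa [mul_comm])
  exact ⟨w, fun i => mem_convergent_of_wnorm_ne_top hr
    (ne_top_of_le_ne_top hw (wnorm_le_vnorm w i)), hsol⟩

theorem add_dotProduct_self_eq {n w : ι → Series σ} {G : Series σ}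
    (h : n ⬝ᵥ w = (2⁻¹ : ℝ) • (G - n ⬝ᵥ n - w ⬝ᵥ w)) : (n + w) ⬝ᵥ (n + w) = G := by
  have htwo : (2 : ℝ) • (n ⬝ᵥ w) = G - n ⬝ᵥ n - w ⬝ᵥ w := by
    rw [h, smul_inv_smul₀ two_ne_zero]
  rw [two_smul] at htwo
  rw [add_dotProduct, dotProduct_add, dotProduct_add, dotProduct_comm w n]
  linear_combination htwo

theorem exists_convergent_solution [Finite κ] {A : Matrix κ ι (Series σ)}
    (hA : ∀ k i, A k i ∈ convergent σ) {ρ : κ → Series σ} (hρ : ∀ k, ρ k ∈ convergent σ)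
    {G : Series σ} (hG : G ∈ convergent σ) {n : ι → ℝ}
    (hAn : A.map constantCoeff *ᵥ n = constantCoeff ∘ ρ) (hGn : n ⬝ᵥ n = constantCoeff G)
    (hsurj : Function.Surjective
      (fromRows (A.map constantCoeff) (replicateRow Unit n)).mulVec) :
    ∃ z : ι → Series σ, (∀ i, z i ∈ convergent σ) ∧ A *ᵥ z = ρ ∧ z ⬝ᵥ z = G := by
  set n' : ι → Series σ := fun i => MvPowerSeries.C (n i)
  have hn' : ∀ i, n' i ∈ convergent σ := fun i => C_mem_convergent _
  have hcn' : constantCoeff ∘ n' = n := funext fun i => MvPowerSeries.constantCoeff_C _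
  set b : κ ⊕ Unit → Series σ := Sum.elim (ρ - A *ᵥ n') fun _ => (2⁻¹ : ℝ) • (G - n' ⬝ᵥ n')
  have hb : ∀ k, b k ∈ convergent σ := by
    rintro (k | -)
    · exact sub_mem (hρ k) (dotProduct_mem_convergent (hA k) hn')
    · exact (convergent σ).smul_mem (sub_mem hG (dotProduct_mem_convergent hn' hn')) _
  have hb0 : ∀ k, constantCoeff (b k) = 0 := by
    rintro (k | -)
    · change constantCoeff (ρ k - (A *ᵥ n') k) = 0
      rw [map_sub, RingHom.map_mulVec, hcn', hAn, Function.comp_apply, sub_self]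
    · change constantCoeff ((2⁻¹ : ℝ) • (G - n' ⬝ᵥ n')) = 0
      rw [MvPowerSeries.constantCoeff_smul, map_sub, RingHom.map_dotProduct, hcn', hGn, sub_self,
        smul_zero]
  -- With `z = n + w`, the last equation becomes `n ⬝ᵥ w = (G - n ⬝ᵥ n - w ⬝ᵥ w) / 2`.
  obtain ⟨w, hw, hsol⟩ := exists_convergent_quadratic_solution hsurj hb hb0
    (D := fromRows (constDefect A) 0)
    (by rintro (k | -) i; exacts [constDefect_mem_convergent hA k i, zero_mem _])
    (by rintro (k | -) i; exacts [constantCoeff_constDefect A k i, map_zero _])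
    (Sum.elim 0 fun _ => -2⁻¹)
  refine ⟨n' + w, fun i => add_mem (hn' i) (hw i), funext fun k => ?_, ?_⟩
  · have hk : constMulVec (A.map constantCoeff) w k =
        (ρ k - (A *ᵥ n') k) + constDefect A k ⬝ᵥ w + (0 : ℝ) • (w ⬝ᵥ w) := hsol (.inl k)
    rw [constDefect_dotProduct, zero_smul] at hk
    rw [mulVec_add, Pi.add_apply]
    change _ + A k ⬝ᵥ w = _
    linear_combination hk
  · have hn : n' ⬝ᵥ w = (2⁻¹ : ℝ) • (G - n' ⬝ᵥ n') + 0 ⬝ᵥ w + (-2⁻¹ : ℝ) • (w ⬝ᵥ w) :=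
      hsol (.inr ())
    rw [zero_dotProduct, add_zero, neg_smul, ← sub_eq_add_neg, ← smul_sub] at hn
    exact add_dotProduct_self_eq hn

end Solvability

/-! ### The Cauchy–Kovalevskaya step -/

section Evolution

variable {κ : Type*} [Fintype ι] {t : σ} {r ε : ℝ≥0}

theorem IsSmoothing.vnorm_le {T : Series σ →ₗ[ℝ] Series σ} (hT : IsSmoothing t T) (hr : r ≤ 1)
    (hε : ε ≤ 1) (w : ι → Series σ) :
    vnorm (dirWeight t r ε) (T ∘ w) ≤ ε * vnorm (dirWeight t r ε) w :=
  vnorm_le_mul_vnorm fun i => hT hr hε (w i)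

theorem wnorm_cross_terms_le {B B' : Series σ →ₗ[ℝ] Series σ} (hB : IsSmoothing t B)
    (hB' : IsSmoothing t B') (hr : r ≤ 1) (hε : ε ≤ 1) (p p' D y : ι → Series σ) :
    wnorm (dirWeight t r ε) (p ⬝ᵥ B' ∘ y + B ∘ y ⬝ᵥ p' + D ⬝ᵥ y) ≤
      (ε * (vnorm (radialWeight r) p + vnorm (radialWeight r) p') + vnorm (radialWeight r) D) *
        vnorm (dirWeight t r ε) y := by
  have hle : ∀ z : ι → Series σ, vnorm (dirWeight t r ε) z ≤ vnorm (radialWeight r) z :=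
    vnorm_mono (dirWeight_le_radialWeight t r hε)
  have hdot : ∀ z z' : ι → Series σ, wnorm (dirWeight t r ε) (z ⬝ᵥ z') ≤
      vnorm (dirWeight t r ε) z * vnorm (dirWeight t r ε) z' :=
    wnorm_dotProduct_le (dirWeight_add_le t r ε)
  set Y := vnorm (dirWeight t r ε) y
  calc wnorm (dirWeight t r ε) (p ⬝ᵥ B' ∘ y + B ∘ y ⬝ᵥ p' + D ⬝ᵥ y)
    _ ≤ vnorm (radialWeight r) p * (ε * Y) + ε * Y * vnorm (radialWeight r) p' +
          vnorm (radialWeight r) D * Y :=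
        (wnorm_add_le _ _).trans (add_le_add ((wnorm_add_le _ _).trans (add_le_add
          ((hdot _ _).trans (mul_le_mul' (hle p) (hB'.vnorm_le hr hε y)))
          ((hdot _ _).trans (mul_le_mul' (hB.vnorm_le hr hε y) (hle p')))))
          ((hdot _ _).trans (mul_le_mul_left (hle D) Y)))
    _ = (ε * (vnorm (radialWeight r) p + vnorm (radialWeight r) p') + vnorm (radialWeight r) D) *
          Y := by ring

theorem wnorm_quadratic_terms_le {P B B' : Series σ →ₗ[ℝ] Series σ} (hP : IsSmoothing t P)
    (hB : IsSmoothing t B) (hB' : IsSmoothing t B') (hr : r ≤ 1) (hε : ε ≤ 1)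
    (y z : ι → Series σ) :
    wnorm (dirWeight t r ε) (B ∘ y ⬝ᵥ B' ∘ z - P ∘ y ⬝ᵥ z) ≤
      ε * 2 * (vnorm (dirWeight t r ε) y * vnorm (dirWeight t r ε) z) := by
  have hdot : ∀ z z' : ι → Series σ, wnorm (dirWeight t r ε) (z ⬝ᵥ z') ≤
      vnorm (dirWeight t r ε) z * vnorm (dirWeight t r ε) z' :=
    wnorm_dotProduct_le (dirWeight_add_le t r ε)
  have hB'z : vnorm (dirWeight t r ε) (B' ∘ z) ≤ vnorm (dirWeight t r ε) z :=
    (hB'.vnorm_le hr hε z).trans (mul_le_of_le_one_left zero_le (by exact_mod_cast hε))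
  set Y := vnorm (dirWeight t r ε) y
  set Z := vnorm (dirWeight t r ε) z
  calc wnorm (dirWeight t r ε) (B ∘ y ⬝ᵥ B' ∘ z - P ∘ y ⬝ᵥ z) ≤ ε * Y * Z + ε * Y * Z := by
        rw [sub_eq_add_neg]
        refine (wnorm_add_le _ _).trans (add_le_add ?_ ?_)
        · exact (hdot _ _).trans (mul_le_mul' (hB.vnorm_le hr hε y) hB'z)
        · rw [wnorm_neg]
          exact (hdot _ _).trans (mul_le_mul_left (hP.vnorm_le hr hε y) Z)
    _ = ε * 2 * (Y * Z) := by ring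

theorem exists_evolution_of_small [Fintype κ] [DecidableEq κ]
    {P B B' : κ → Series σ →ₗ[ℝ] Series σ}
    (hP : ∀ k, IsSmoothing t (P k)) (hB : ∀ k, IsSmoothing t (B k))
    (hB' : ∀ k, IsSmoothing t (B' k)) (a p p' : Matrix κ ι (Series σ)) (b : κ → Series σ)
    {S : Matrix ι κ ℝ} (hS : a.map constantCoeff * S = 1) (hr : r ∈ Ioc 0 1) (hε : ε ∈ Ioc 0 1)
    (hl : (ε * (∑ k, (vnorm (radialWeight r) (p k) + vnorm (radialWeight r) (p' k))) +
      ∑ k, vnorm (radialWeight r) (constDefect a k)) * (∑ i, ∑ k, ‖S i k‖ₑ) ≤ 4⁻¹)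
    (hb : vnorm (radialWeight r) b ≠ ∞)
    (hq : (ε * ∑ _k : κ, 2) * (∑ i, ∑ k, ‖S i k‖ₑ) ^ 2 * vnorm (radialWeight r) b ≤ 16⁻¹) :
    ∃ w : ι → Series σ, vnorm (dirWeight t r ε) w ≠ ∞ ∧ ∀ k,
      constMulVec (a.map constantCoeff) w k =
        b k + (p k ⬝ᵥ B' k ∘ w + B k ∘ w ⬝ᵥ p' k + constDefect a k ⬝ᵥ w) +
          (B k ∘ w ⬝ᵥ B' k ∘ w - P k ∘ w ⬝ᵥ w) := by
  have hble : vnorm (dirWeight t r ε) b ≤ vnorm (radialWeight r) b :=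
    vnorm_mono (dirWeight_le_radialWeight t r hε.2) b
  exact exists_quadratic_system (dirWeight_ne_zero t hr.1 hε.1) (dirWeight_ne_top t r ε) hS b
    (fun k => dotBilin σ ι (p k) ∘ₗ (B' k).compLeft ι +
      (dotBilin σ ι).flip (p' k) ∘ₗ (B k).compLeft ι + dotBilin σ ι (constDefect a k))
    (fun k => (dotBilin σ ι).compl₁₂ ((B k).compLeft ι) ((B' k).compLeft ι) -
      dotBilin σ ι ∘ₗ (P k).compLeft ι)
    (fun k y => wnorm_cross_terms_le (hB k) (hB' k) hr.2 hε.2 _ _ _ y)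
    (fun k y z => wnorm_quadratic_terms_le (hP k) (hB k) (hB' k) hr.2 hε.2 y z)
    (by rwa [Finset.sum_add_distrib, ← Finset.mul_sum])
    (ne_top_of_le_ne_top hb hble)
    (by rw [← Finset.mul_sum]; exact le_trans (by gcongr) hq)

theorem exists_small_radii [Fintype κ] {a p p' : Matrix κ ι (Series σ)} {b : κ → Series σ}
    (ha : ∀ k i, a k i ∈ convergent σ) (hp : ∀ k i, p k i ∈ convergent σ)
    (hp' : ∀ k i, p' k i ∈ convergent σ) (hb : ∀ k, b k ∈ convergent σ) {N : ℝ≥0∞} (hN : N ≠ ∞) :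
    ∃ r ∈ Ioc (0 : ℝ≥0) 1, ∃ ε ∈ Ioc (0 : ℝ≥0) 1,
      (ε * (∑ k, (vnorm (radialWeight r) (p k) + vnorm (radialWeight r) (p' k))) +
        ∑ k, vnorm (radialWeight r) (constDefect a k)) * N ≤ 4⁻¹ ∧
      vnorm (radialWeight r) b ≠ ∞ ∧
      (ε * ∑ _k : κ, 2) * N ^ 2 * vnorm (radialWeight r) b ≤ 16⁻¹ := by
  obtain ⟨r, hra, hrp, hrp', hrb, hr⟩ := ((eventually_mul_le (tendsto_sum_vnorm_zero
    (constDefect_mem_convergent ha) (constantCoeff_constDefect a)) hN (c := 8⁻¹) (by simp)).and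
      ((Filter.eventually_all.2 fun k => eventually_vnorm_ne_top (hp k)).and
        ((Filter.eventually_all.2 fun k => eventually_vnorm_ne_top (hp' k)).and
          ((eventually_vnorm_ne_top hb).and (Ioc_mem_nhdsGT one_pos))))).exists
  set M := ∑ k, (vnorm (radialWeight r) (p k) + vnorm (radialWeight r) (p' k))
  have hM : M ≠ ∞ := ENNReal.sum_ne_top.2 fun k _ => ENNReal.add_ne_top.2 ⟨hrp k, hrp' k⟩
  have htwo : ∑ _k : κ, (2 : ℝ≥0∞) ≠ ∞ := ENNReal.sum_ne_top.2 fun _ _ => ENNReal.ofNat_ne_top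
  obtain ⟨ε, hεM, hεb, hε⟩ := ((eventually_mul_le tendsto_coe_nhdsGT_zero
    (B := M * N) (c := 8⁻¹) (ENNReal.mul_ne_top hM hN) (by simp)).and
      ((eventually_mul_le tendsto_coe_nhdsGT_zero
        (B := (∑ _k : κ, 2) * N ^ 2 * vnorm (radialWeight r) b) (c := 16⁻¹) (by finiteness)
        (by simp)).and (Ioc_mem_nhdsGT one_pos))).exists
  refine ⟨r, hr, ε, hε, ?_, hrb, by simpa only [mul_assoc] using hεb⟩
  have hhalf : (8⁻¹ : ℝ≥0∞) = 4⁻¹ / 2 := by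
    rw [div_eq_mul_inv, ← ENNReal.mul_inv (by simp) (by simp)]
    norm_num
  calc (ε * M + ∑ k, vnorm (radialWeight r) (constDefect a k)) * N
    _ = ε * (M * N) + (∑ k, vnorm (radialWeight r) (constDefect a k)) * N := by ring
    _ ≤ 8⁻¹ + 8⁻¹ := add_le_add hεM hra
    _ = 4⁻¹ := by rw [hhalf, ENNReal.add_halves]

theorem exists_evolution [Finite κ] {P B B' : κ → Series σ →ₗ[ℝ] Series σ}
    (hP : ∀ k, IsSmoothing t (P k)) (hB : ∀ k, IsSmoothing t (B k))
    (hB' : ∀ k, IsSmoothing t (B' k)) {a p p' : Matrix κ ι (Series σ)} {c : κ → Series σ}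
    (ha : ∀ k i, a k i ∈ convergent σ) (hp : ∀ k i, p k i ∈ convergent σ)
    (hp' : ∀ k i, p' k i ∈ convergent σ) (hc : ∀ k, c k ∈ convergent σ)
    (hsurj : Function.Surjective (a.map constantCoeff).mulVec) :
    ∃ w : ι → Series σ, (∀ i, w i ∈ convergent σ) ∧ ∀ k,
      (a k + P k ∘ w) ⬝ᵥ w = c k + (p k + B k ∘ w) ⬝ᵥ (p' k + B' k ∘ w) := by
  classical
  cases nonempty_fintype κ
  obtain ⟨S, hS⟩ := Matrix.mulVec_surjective_iff_exists_right_inverse.1 hsurj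
  have hb : ∀ k, c k + p k ⬝ᵥ p' k ∈ convergent σ := fun k =>
    add_mem (hc k) (dotProduct_mem_convergent (hp k) (hp' k))
  obtain ⟨r, hr, ε, hε, hl, hrb, hq⟩ := exists_small_radii ha hp hp' hb (sum_enorm_ne_top S)
  obtain ⟨w, hw, hsol⟩ := exists_evolution_of_small hP hB hB' a p p' _ hS hr hε hl hrb hq
  refine ⟨w, fun i => mem_convergent_of_wnorm_dirWeight_ne_top hr.1 hε.1 hε.2
    (ne_top_of_le_ne_top hw (wnorm_le_vnorm w i)), fun k => ?_⟩
  have hk := hsol k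
  rw [constDefect_dotProduct] at hk
  simp only [add_dotProduct, dotProduct_add]
  linear_combination hk

end Evolution

/-! ### Induced metrics and Christoffel symbols -/

section InducedMetric

theorem map_comp_add {F M N : Type*} [Add M] [Add N] [FunLike F M N] [AddHomClass F M N] (L : F)
    (x y : ι → M) : L ∘ (x + y) = L ∘ x + L ∘ y :=
  funext fun a => map_add L (x a) (y a)

theorem pd_integ_comp_self (t : σ) (u : ι → Series σ) : pd t ∘ integ t ∘ u = u :=
  funext fun a => pd_integ_self t (u a)

theorem constantCoeff_restr_comp (t : σ) (u : ι → Series σ) :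
    constantCoeff ∘ restr t ∘ u = constantCoeff ∘ u :=
  funext fun a => constantCoeff_restr t (u a)

theorem restr_integ_comp (t : σ) (u : ι → Series σ) : restr t ∘ integ t ∘ u = 0 :=
  funext fun a => restr_integ t (u a)

theorem pd_comp_comm (i j : σ) (u : ι → Series σ) : pd i ∘ pd j ∘ u = pd j ∘ pd i ∘ u :=
  funext fun a => pd_comm i j (u a)

theorem pd_restr_comp_comm {i t : σ} (h : i ≠ t) (u : ι → Series σ) :
    pd i ∘ restr t ∘ u = restr t ∘ pd i ∘ u :=
  funext fun a => pd_restr_comm h (u a)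

theorem restr_pd_comp_congr {i t : σ} (hi : i ≠ t) {u v : ι → Series σ}
    (h : restr t ∘ u = restr t ∘ v) : restr t ∘ pd i ∘ u = restr t ∘ pd i ∘ v := by
  rw [← pd_restr_comp_comm hi, h, pd_restr_comp_comm hi]

variable [Fintype ι]

theorem pd_dotProduct (i : σ) (u v : ι → Series σ) :
    pd i (u ⬝ᵥ v) = (pd i ∘ u) ⬝ᵥ v + u ⬝ᵥ (pd i ∘ v) := by
  simp only [dotProduct, map_sum, pd_mul, Finset.sum_add_distrib, Function.comp_apply]

theorem restr_dotProduct (t : σ) (u v : ι → Series σ) :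
    restr t (u ⬝ᵥ v) = (restr t ∘ u) ⬝ᵥ (restr t ∘ v) :=
  (restr t).toRingHom.map_dotProduct u v

/-- The metric `⟨∂ᵢu, ∂ⱼu⟩` induced by a vector `u` of power series. -/
def induced (u : ι → Series σ) : Matrix σ σ (Series σ) :=
  of fun i j => (pd i ∘ u) ⬝ᵥ (pd j ∘ u)

theorem induced_apply (u : ι → Series σ) (i j : σ) :
    induced u i j = (pd i ∘ u) ⬝ᵥ (pd j ∘ u) := rfl

theorem induced_isSymm (u : ι → Series σ) : (induced u).IsSymm :=
  IsSymm.ext fun _ _ => dotProduct_comm _ _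

/-- The Christoffel symbol of the first kind `Γᵢⱼ,ₖ = (∂ᵢgⱼₖ + ∂ⱼgᵢₖ - ∂ₖgᵢⱼ) / 2`. -/
def christoffel (g : Matrix σ σ (Series σ)) (i j k : σ) : Series σ :=
  (1 / 2 : ℝ) • (pd i (g j k) + pd j (g i k) - pd k (g i j))

theorem christoffel_sub (g g' : Matrix σ σ (Series σ)) (i j k : σ) :
    christoffel (g - g') i j k = christoffel g i j k - christoffel g' i j k := by
  simp only [christoffel, Matrix.sub_apply, map_sub]
  module

theorem christoffel_comm {g : Matrix σ σ (Series σ)} (hg : g.IsSymm) (i j k : σ) :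
    christoffel g i j k = christoffel g j i k := by
  rw [christoffel, christoffel, hg.apply i j, add_comm (pd i _)]

theorem christoffel_mem_convergent {g : Matrix σ σ (Series σ)} (hg : ∀ i j, g i j ∈ convergent σ)
    (i j k : σ) : christoffel g i j k ∈ convergent σ :=
  (convergent σ).smul_mem (sub_mem (add_mem (pd_mem_convergent i (hg j k))
    (pd_mem_convergent j (hg i k))) (pd_mem_convergent k (hg i j))) _

theorem christoffel_induced (u : ι → Series σ) (i j k : σ) :
    christoffel (induced u) i j k = (pd i ∘ pd j ∘ u) ⬝ᵥ (pd k ∘ u) := by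
  simp only [christoffel, induced_apply, pd_dotProduct]
  rw [pd_comp_comm j i, pd_comp_comm k i, pd_comp_comm k j,
    dotProduct_comm (pd j ∘ u), dotProduct_comm (pd i ∘ u) (pd j ∘ pd k ∘ u)]
  module

/-- A form of the Gauss equation: the left-hand side depends on `u` only through its metric. -/
theorem pd_christoffel_induced (u : ι → Series σ) (i j t : σ) :
    pd t (christoffel (induced u) i j t) - (1 / 2 : ℝ) • pd i (pd j (induced u t t)) =
      (pd i ∘ pd j ∘ u) ⬝ᵥ (pd t ∘ pd t ∘ u) - (pd i ∘ pd t ∘ u) ⬝ᵥ (pd j ∘ pd t ∘ u) := by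
  rw [christoffel_induced, induced_apply]
  simp only [pd_dotProduct, map_add]
  rw [pd_comp_comm t i, pd_comp_comm t j, dotProduct_comm (pd t ∘ u) (pd i ∘ _),
    dotProduct_comm (pd j ∘ pd t ∘ u) (pd i ∘ _)]
  module

end InducedMetric

/-- Uniqueness for the evolution equations of an isometric immersion in the direction `t`: `D t t`,
then `D i t`, then `christoffel D i j t`, then `D i j` are found to be independent of `t`. -/
theorem eq_zero_of_evolution {t : σ} {S : Set σ} {D : Matrix σ σ (Series σ)} (hD : D.IsSymm)
    (h0 : ∀ i ∈ insert t S, ∀ j ∈ insert t S, restr t (D i j) = 0)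
    (hΓ0 : ∀ i ∈ S, ∀ j ∈ S, restr t (christoffel D i j t) = 0)
    (htt : ∀ i ∈ insert t S, christoffel D t t i = 0)
    (hgauss : ∀ i ∈ S, ∀ j ∈ S,
      pd t (christoffel D i j t) = (1 / 2 : ℝ) • pd i (pd j (D t t))) :
    ∀ i ∈ insert t S, ∀ j ∈ insert t S, D i j = 0 := by
  have ht : t ∈ insert t S := mem_insert t S
  have hDtt : D t t = 0 := by
    refine eq_zero_of_pd_eq_zero_of_restr_eq_zero ?_ (h0 t ht t ht)
    have h := htt t ht
    rw [christoffel] at h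
    linear_combination (norm := module) (2 : ℝ) • h
  have hDt : ∀ i ∈ insert t S, D t i = 0 := fun i hi => by
    refine eq_zero_of_pd_eq_zero_of_restr_eq_zero ?_ (h0 t ht i hi)
    have h := htt i hi
    rw [christoffel, hDtt, map_zero] at h
    linear_combination (norm := module) h
  have hΓ : ∀ i ∈ S, ∀ j ∈ S, christoffel D i j t = 0 := fun i hi j hj => by
    refine eq_zero_of_pd_eq_zero_of_restr_eq_zero ?_ (hΓ0 i hi j hj)
    rw [hgauss i hi j hj, hDtt, map_zero, map_zero, smul_zero]
  intro i hi j hj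
  rcases mem_insert_iff.1 hi with rfl | hiS
  · exact hDt j hj
  rcases mem_insert_iff.1 hj with rfl | hjS
  · rw [← hD.apply, hDt i hi]
  refine eq_zero_of_pd_eq_zero_of_restr_eq_zero ?_ (h0 i hi j hj)
  have h := hΓ i hiS j hjS
  rw [christoffel, ← hD.apply j, ← hD.apply i, hDt i hi, hDt j hj, map_zero, map_zero] at h
  linear_combination (norm := module) (-2 : ℝ) • h

/-! ### Free maps -/

section Free

variable {S T : Finset σ}

/-- The first derivatives of `u` in the directions `S` and its second derivatives in the directions
`T` are linearly independent at the origin. The condition is encoded dually: a covector has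
arbitrarily prescribed values on these derivatives. -/
def IsFree [Fintype ι] (S T : Finset σ) (u : ι → Series σ) : Prop :=
  ∀ (y : σ → ℝ) (y' : Sym2 σ → ℝ), ∃ z : ι → ℝ,
    (∀ i ∈ S, (constantCoeff ∘ pd i ∘ u) ⬝ᵥ z = y i) ∧
      ∀ i ∈ T, ∀ j ∈ T, (constantCoeff ∘ pd i ∘ pd j ∘ u) ⬝ᵥ z = y' s(i, j)

theorem IsFree.congr [Fintype ι] {u v : ι → Series σ} (hu : IsFree S T u)
    (h1 : ∀ i ∈ S, constantCoeff ∘ pd i ∘ v = constantCoeff ∘ pd i ∘ u)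
    (h2 : ∀ i ∈ T, ∀ j ∈ T, constantCoeff ∘ pd i ∘ pd j ∘ v = constantCoeff ∘ pd i ∘ pd j ∘ u) :
    IsFree S T v := fun y y' => by
  obtain ⟨z, hz, hz'⟩ := hu y y'
  exact ⟨z, fun i hi => h1 i hi ▸ hz i hi, fun i hi j hj => h2 i hi j hj ▸ hz' i hi j hj⟩

/-- An arbitrary ordered pair representing an unordered one. -/
def orderedPair (q : Sym2 S) : σ × σ := Prod.map (↑) (↑) (Quot.out q)

theorem orderedPair_fst_mem (q : Sym2 S) : (orderedPair q).1 ∈ S :=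
  (Quot.out q).1.2

theorem orderedPair_snd_mem (q : Sym2 S) : (orderedPair q).2 ∈ S :=
  (Quot.out q).2.2

theorem mk_orderedPair (q : Sym2 S) :
    s((orderedPair q).1, (orderedPair q).2) = Sym2.map Subtype.val q := by
  conv_rhs => rw [← Quot.out_eq q]
  rfl

theorem orderedPair_mk (i j : S) :
    orderedPair s(i, j) = ((i : σ), (j : σ)) ∨ orderedPair s(i, j) = ((j : σ), (i : σ)) :=
  Sym2.mk_eq_mk_iff.1 (mk_orderedPair s(i, j))

/-- The operators producing the derivatives of `IsFree`. -/
def jetOp (S T : Finset σ) : S ⊕ Sym2 T → Series σ →ₗ[ℝ] Series σ :=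
  Sum.elim (fun i => pd i) fun q => pd (orderedPair q).1 ∘ₗ pd (orderedPair q).2

/-- The matrix of the derivatives of `IsFree`. -/
def jetMatrix (S T : Finset σ) (u : ι → Series σ) : Matrix (S ⊕ Sym2 T) ι (Series σ) :=
  of fun k => jetOp S T k ∘ u

theorem jetMatrix_mem_convergent {u : ι → Series σ}
    (hu : ∀ a, u a ∈ convergent σ) (k : S ⊕ Sym2 T) (a : ι) : jetMatrix S T u k a ∈ convergent σ :=
  match k with
  | .inl _ => pd_mem_convergent _ (hu a)
  | .inr _ => pd_mem_convergent _ (pd_mem_convergent _ (hu a))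

theorem IsFree.surjective_jetMatrix [Fintype ι] {u : ι → Series σ} (hu : IsFree S T u) :
    Function.Surjective ((jetMatrix S T u).map constantCoeff).mulVec := fun y => by
  obtain ⟨z, hz, hz'⟩ := hu (Function.extend Subtype.val (y ∘ Sum.inl) 0)
    (Function.extend (Sym2.map Subtype.val) (y ∘ Sum.inr) 0)
  refine ⟨z, funext ?_⟩
  rintro (i | q)
  · exact (hz i i.2).trans (Subtype.val_injective.extend_apply _ _ i)
  · refine (hz' _ (orderedPair_fst_mem q) _ (orderedPair_snd_mem q)).trans ?_
    rw [mk_orderedPair, (Sym2.map.injective Subtype.val_injective).extend_apply]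
    rfl

theorem jetMatrix_mulVec_eq_iff [Fintype ι] {u v : ι → Series σ} {b : σ → Series σ}
    {c : σ → σ → Series σ} (hc : ∀ i j, c i j = c j i) :
    jetMatrix S T u *ᵥ v = Sum.elim (fun i : S => b i)
        (fun q : Sym2 T => c (orderedPair q).1 (orderedPair q).2) ↔
      (∀ i ∈ S, (pd i ∘ u) ⬝ᵥ v = b i) ∧
        ∀ i ∈ T, ∀ j ∈ T, (pd i ∘ pd j ∘ u) ⬝ᵥ v = c i j := by
  refine ⟨fun h => ⟨fun i hi => congrFun h (Sum.inl ⟨i, hi⟩), fun i hi j hj => ?_⟩, fun h => ?_⟩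
  · have hq := congrFun h (Sum.inr s(⟨i, hi⟩, ⟨j, hj⟩))
    change (pd _ ∘ pd _ ∘ u) ⬝ᵥ v = c _ _ at hq
    rcases orderedPair_mk ⟨i, hi⟩ ⟨j, hj⟩ with h | h
    · rwa [h] at hq
    · rwa [h, pd_comp_comm, hc] at hq
  · exact funext (Sum.rec (fun i => h.1 i i.2)
      fun q => h.2 _ (orderedPair_fst_mem q) _ (orderedPair_snd_mem q))

end Free

/-! ### The Burstin extension -/

section Extension

variable {t : σ} {S : Finset σ}

theorem isSmoothing_zero (t : σ) : IsSmoothing t 0 := fun r ε _ _ f => by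
  rw [LinearMap.zero_apply, wnorm_zero]
  exact zero_le

theorem isSmoothing_pd_comp_integ_comp_integ (i t : σ) :
    IsSmoothing t (pd i ∘ₗ integ t ∘ₗ integ t) := by
  by_cases hi : i = t
  · subst hi
    convert isSmoothing_integ i using 1
    exact LinearMap.ext fun f => pd_integ_self i _
  · exact (isSmoothing_pd_comp_integ hi).comp (isSmoothing_integ t)

theorem isSmoothing_jetOp_comp_integ_comp_integ [DecidableEq σ] (ht : t ∉ S)
    (k : ↥(insert t S) ⊕ Sym2 S) :
    IsSmoothing t (jetOp (insert t S) S k ∘ₗ integ t ∘ₗ integ t) := by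
  rcases k with i | q
  · exact isSmoothing_pd_comp_integ_comp_integ (i : σ) t
  · have hfst := ne_of_mem_of_not_mem (orderedPair_fst_mem q) ht
    have hsnd := ne_of_mem_of_not_mem (orderedPair_snd_mem q) ht
    convert (isSmoothing_pd_comp_integ hfst).comp (isSmoothing_pd_comp_integ hsnd) using 1
    refine LinearMap.ext fun f => congrArg (pd _) ?_
    exact pd_integ_comm hsnd _

variable [Fintype ι]

/-- The evolution equation is solved for `w = ∂ₜ²u`, where `u = U + ∬ w`. -/
theorem exists_jet_evolution [DecidableEq σ] (ht : t ∉ S) {U : ι → Series σ}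
    (hU : ∀ a, U a ∈ convergent σ) (hfree : IsFree (insert t S) S U) {b : σ → Series σ}
    (hb : ∀ i, b i ∈ convergent σ) {c : σ → σ → Series σ} (hc : ∀ i j, c i j ∈ convergent σ) :
    ∃ w : ι → Series σ, (∀ a, w a ∈ convergent σ) ∧
      jetMatrix (insert t S) S (U + integ t ∘ integ t ∘ w) *ᵥ w =
        Sum.elim (fun i : ↥(insert t S) => b i) fun q : Sym2 S =>
          c (orderedPair q).1 (orderedPair q).2 +
          (pd (orderedPair q).1 ∘ (pd t ∘ U + integ t ∘ w)) ⬝ᵥ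
            (pd (orderedPair q).2 ∘ (pd t ∘ U + integ t ∘ w)) := by
  classical
  obtain ⟨w, hw, heq⟩ := exists_evolution (isSmoothing_jetOp_comp_integ_comp_integ ht)
    (B := Sum.elim (fun _ => 0) fun q => pd (orderedPair q).1 ∘ₗ integ t)
    (B' := Sum.elim (fun _ => 0) fun q => pd (orderedPair q).2 ∘ₗ integ t)
    (Sum.rec (fun _ => isSmoothing_zero t) fun q =>
      isSmoothing_pd_comp_integ (ne_of_mem_of_not_mem (orderedPair_fst_mem q) ht))
    (Sum.rec (fun _ => isSmoothing_zero t) fun q =>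
      isSmoothing_pd_comp_integ (ne_of_mem_of_not_mem (orderedPair_snd_mem q) ht))
    (p := Sum.elim (fun _ => 0) fun q => pd (orderedPair q).1 ∘ pd t ∘ U)
    (p' := Sum.elim (fun _ => 0) fun q => pd (orderedPair q).2 ∘ pd t ∘ U)
    (c := Sum.elim (fun i => b i) fun q => c (orderedPair q).1 (orderedPair q).2)
    (jetMatrix_mem_convergent hU)
    (Sum.rec (fun _ _ => zero_mem _)
      fun q a => pd_mem_convergent _ (pd_mem_convergent t (hU a)))
    (Sum.rec (fun _ _ => zero_mem _)
      fun q a => pd_mem_convergent _ (pd_mem_convergent t (hU a)))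
    (Sum.rec (fun i => hb i) fun q => hc _ _) hfree.surjective_jetMatrix
  refine ⟨w, hw, funext fun k => ?_⟩
  change (jetOp _ _ k ∘ (U + integ t ∘ integ t ∘ w)) ⬝ᵥ w = _
  rw [map_comp_add]
  refine (heq k).trans ?_
  rcases k with i | q
  · change b i + (0 + (0 : ι → Series σ)) ⬝ᵥ (0 + (0 : ι → Series σ)) = b i
    rw [add_zero, dotProduct_zero, add_zero]
  · simp only [Sum.elim_inr, map_comp_add]
    rfl

theorem exists_second_order_solution [DecidableEq σ] (ht : t ∉ S) {U : ι → Series σ}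
    (hU : ∀ a, U a ∈ convergent σ) (hUtt : pd t ∘ pd t ∘ U = 0)
    (hfree : IsFree (insert t S) S U) {b : σ → Series σ} (hb : ∀ i, b i ∈ convergent σ)
    {c : σ → σ → Series σ} (hc : ∀ i j, c i j ∈ convergent σ) (hcsymm : ∀ i j, c i j = c j i) :
    ∃ u : ι → Series σ, (∀ a, u a ∈ convergent σ) ∧ restr t ∘ u = restr t ∘ U ∧
      restr t ∘ pd t ∘ u = restr t ∘ pd t ∘ U ∧
      (∀ i ∈ insert t S, (pd i ∘ u) ⬝ᵥ (pd t ∘ pd t ∘ u) = b i) ∧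
      ∀ i ∈ S, ∀ j ∈ S, (pd i ∘ pd j ∘ u) ⬝ᵥ (pd t ∘ pd t ∘ u) =
        c i j + (pd i ∘ pd t ∘ u) ⬝ᵥ (pd j ∘ pd t ∘ u) := by
  obtain ⟨w, hw, heq⟩ := exists_jet_evolution ht hU hfree hb hc
  have hut : pd t ∘ (U + integ t ∘ integ t ∘ w) = pd t ∘ U + integ t ∘ w := by
    rw [map_comp_add, pd_integ_comp_self]
  have hutt : pd t ∘ pd t ∘ (U + integ t ∘ integ t ∘ w) = w := by
    rw [hut, map_comp_add, hUtt, pd_integ_comp_self, zero_add]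
  refine ⟨U + integ t ∘ integ t ∘ w, fun a => add_mem (hU a)
    (integ_mem_convergent t (integ_mem_convergent t (hw a))), ?_, ?_, ?_⟩
  · rw [map_comp_add, restr_integ_comp, add_zero]
  · rw [hut, map_comp_add, restr_integ_comp, add_zero]
  rw [hutt, hut]
  exact (jetMatrix_mulVec_eq_iff fun i j => by rw [hcsymm, dotProduct_comm]).1 heq

/-- `U` is an approximation of the immersion to first order in `t`: its metric has the right trace
on the hyperplane `t = 0`, and so have the Christoffel symbols `⟨∂ᵢ∂ⱼU, ∂ₜU⟩` which prescribe the
second fundamental form in the direction `∂ₜU`. -/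
theorem exists_isometric_extension [DecidableEq σ] (ht : t ∉ S) {g : Matrix σ σ (Series σ)}
    (hsymm : g.IsSymm) (hg : ∀ i j, g i j ∈ convergent σ) {U : ι → Series σ}
    (hU : ∀ a, U a ∈ convergent σ) (hUtt : pd t ∘ pd t ∘ U = 0)
    (hfree : IsFree (insert t S) S U)
    (hmetric : ∀ i ∈ insert t S, ∀ j ∈ insert t S, restr t (induced U i j) = restr t (g i j))
    (hchrist : ∀ i ∈ S, ∀ j ∈ S,
      restr t (christoffel (induced U) i j t) = restr t (christoffel g i j t)) :
    ∃ u : ι → Series σ, (∀ a, u a ∈ convergent σ) ∧ IsFree (insert t S) S u ∧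
      ∀ i ∈ insert t S, ∀ j ∈ insert t S, induced u i j = g i j := by
  obtain ⟨u, hu, hu0, hut0, hb, hc⟩ := exists_second_order_solution ht hU hUtt hfree
    (b := fun i => christoffel g t t i) (fun i => christoffel_mem_convergent hg _ _ _)
    (c := fun i j => pd t (christoffel g i j t) - (1 / 2 : ℝ) • pd i (pd j (g t t)))
    (fun i j => sub_mem (pd_mem_convergent t (christoffel_mem_convergent hg _ _ _))
      ((convergent σ).smul_mem (pd_mem_convergent i (pd_mem_convergent j (hg t t))) _))
    (fun i j => by rw [christoffel_comm hsymm, pd_comm i j])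
  have hne : ∀ i ∈ S, i ≠ t := fun i hi => ne_of_mem_of_not_mem hi ht
  have hjet1 : ∀ i ∈ insert t S, restr t ∘ pd i ∘ u = restr t ∘ pd i ∘ U := fun i hi => by
    rcases Finset.mem_insert.1 hi with rfl | hi
    · exact hut0
    · exact restr_pd_comp_congr (hne i hi) hu0
  have hjet2 : ∀ i ∈ S, ∀ j ∈ S, restr t ∘ pd i ∘ pd j ∘ u = restr t ∘ pd i ∘ pd j ∘ U :=
    fun i hi j hj => restr_pd_comp_congr (hne i hi) (hjet1 j (Finset.mem_insert_of_mem hj))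
  refine ⟨u, hu, hfree.congr (fun i hi => ?_) fun i hi j hj => ?_, fun i hi j hj => ?_⟩
  · rw [← constantCoeff_restr_comp t, hjet1 i hi, constantCoeff_restr_comp]
  · rw [← constantCoeff_restr_comp t, hjet2 i hi j hj, constantCoeff_restr_comp]
  have hS : ∀ {i}, i ∈ insert t (S : Set σ) ↔ i ∈ insert t S := by simp
  refine sub_eq_zero.1 (eq_zero_of_evolution (D := induced u - g) ((induced_isSymm u).sub hsymm)
    (S := S) ?_ ?_ ?_ ?_ i (hS.2 hi) j (hS.2 hj))
  · intro i hi j hj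
    rw [Matrix.sub_apply, map_sub, ← hmetric i (hS.1 hi) j (hS.1 hj), induced_apply, induced_apply,
      restr_dotProduct, restr_dotProduct, hjet1 i (hS.1 hi), hjet1 j (hS.1 hj), sub_self]
  · intro i hi j hj
    rw [christoffel_sub, map_sub, ← hchrist i hi j hj, christoffel_induced, christoffel_induced,
      restr_dotProduct, restr_dotProduct, hjet2 i hi j hj, hut0, sub_self]
  · intro i hi
    rw [christoffel_sub, christoffel_induced, dotProduct_comm, hb i (hS.1 hi), sub_self]
  · intro i hi j hj
    have hgauss := pd_christoffel_induced u i j t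
    rw [hc i hi j hj] at hgauss
    rw [christoffel_sub, map_sub, Matrix.sub_apply, map_sub, map_sub]
    linear_combination (norm := module) hgauss

end Extension

/-! ### Induction on the dimension -/

section Induction

theorem comp_sumElim_zero {F M N α β : Type*} [Zero M] [Zero N] [FunLike F M N]
    [ZeroHomClass F M N] (L : F) (u : α → M) :
    L ∘ Sum.elim u (0 : β → M) = Sum.elim (L ∘ u) 0 := by
  rw [Sum.comp_elim]
  congr
  exact funext fun _ => map_zero L

variable {s t : σ} {S T : Finset σ} {g : Matrix σ σ (Series σ)}

theorem restr_pd_comp_of_restr_comp {i : σ} (hi : i ≠ t) {u : ι → Series σ}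
    (h : restr t ∘ u = u) : restr t ∘ pd i ∘ u = pd i ∘ u := by
  rw [← pd_restr_comp_comm hi, h]

theorem pd_comp_eq_zero_of_restr_comp {u : ι → Series σ} (h : restr t ∘ u = u) :
    pd t ∘ u = 0 := by
  rw [← h]
  exact funext fun a => pd_restr_self t (u a)

variable [Fintype ι]

/-- A metric which agrees with the Euclidean one to first order at the origin. -/
structure IsFlat [DecidableEq σ] (g : Matrix σ σ (Series σ)) : Prop where
  isSymm : g.IsSymm
  mem_convergent : ∀ i j, g i j ∈ convergent σ
  constantCoeff_eq : g.map constantCoeff = 1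
  constantCoeff_pd : ∀ i j k, constantCoeff (pd k (g i j)) = 0

theorem constantCoeff_dotProduct (u v : ι → Series σ) :
    constantCoeff (u ⬝ᵥ v) = (constantCoeff ∘ u) ⬝ᵥ (constantCoeff ∘ v) :=
  RingHom.map_dotProduct _ u v

theorem IsFlat.constantCoeff_christoffel [DecidableEq σ] (hg : IsFlat g) (i j k : σ) :
    constantCoeff (christoffel g i j k) = 0 := by
  simp only [christoffel, MvPowerSeries.constantCoeff_smul, map_add, map_sub, hg.constantCoeff_pd,
    add_zero, sub_zero, smul_zero]

theorem IsFlat.constantCoeff_apply [DecidableEq σ] (hg : IsFlat g) (i j : σ) :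
    constantCoeff (g i j) = (1 : Matrix σ σ ℝ) i j := by
  rw [← hg.constantCoeff_eq, Matrix.map_apply]

theorem exists_dotProduct_eq {n : ι → ℝ} (hn : n ⬝ᵥ n ≠ 0) (z : ι → ℝ) (x : ℝ) :
    ∃ z' : ι → ℝ, n ⬝ᵥ z' = x ∧ ∀ a : ι → ℝ, a ⬝ᵥ n = 0 → a ⬝ᵥ z' = a ⬝ᵥ z := by
  refine ⟨z + ((x - n ⬝ᵥ z) / (n ⬝ᵥ n)) • n, ?_, fun a ha => ?_⟩
  · rw [dotProduct_add, dotProduct_smul, smul_eq_mul, div_mul_cancel₀ _ hn, add_sub_cancel]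
  · rw [dotProduct_add, dotProduct_smul, ha, smul_zero, add_zero]

theorem surjective_fromRows_mulVec {κ : Type*} {A : Matrix κ ι ℝ}
    (hA : Function.Surjective A.mulVec) {n : ι → ℝ} (hAn : A *ᵥ n = 0) (hn : n ⬝ᵥ n ≠ 0) :
    Function.Surjective (fromRows A (replicateRow Unit n)).mulVec := fun y => by
  obtain ⟨z, hz⟩ := hA (y ∘ Sum.inl)
  obtain ⟨z', hnz, hz'⟩ := exists_dotProduct_eq hn z (y (.inr ()))
  refine ⟨z', ?_⟩
  rw [fromRows_mulVec]
  refine funext (Sum.rec (fun k => ?_) fun _ => hnz)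
  exact (hz' (A k) (congrFun hAn k)).trans (congrFun hz k)

theorem IsFree.insert_of_orthogonal [DecidableEq σ] {u : ι → Series σ} (hu : IsFree S T u)
    (h1 : ∀ i ∈ S, (constantCoeff ∘ pd i ∘ u) ⬝ᵥ (constantCoeff ∘ pd t ∘ u) = 0)
    (h2 : ∀ i ∈ T, ∀ j ∈ T,
      (constantCoeff ∘ pd i ∘ pd j ∘ u) ⬝ᵥ (constantCoeff ∘ pd t ∘ u) = 0)
    (hn : (constantCoeff ∘ pd t ∘ u) ⬝ᵥ (constantCoeff ∘ pd t ∘ u) ≠ 0) :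
    IsFree (insert t S) T u := fun y y' => by
  obtain ⟨z, hz1, hz2⟩ := hu y y'
  obtain ⟨z', hnz, hz'⟩ := exists_dotProduct_eq hn z (y t)
  refine ⟨z', fun i hi => ?_, fun i hi j hj => (hz' _ (h2 i hi j hj)).trans (hz2 i hi j hj)⟩
  rcases Finset.mem_insert.1 hi with rfl | hi
  · exact hnz
  · exact (hz' _ (h1 i hi)).trans (hz1 i hi)

theorem induced_sumElim {κ : Type*} [Fintype κ] (u : ι → Series σ) (v : κ → Series σ) :
    induced (Sum.elim u v) = induced u + induced v := by
  ext1 i j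
  simp only [induced_apply, Matrix.add_apply, Sum.comp_elim, sumElim_dotProduct_sumElim]

theorem IsFree.sumElim_zero {κ : Type*} [Fintype κ] {u : ι → Series σ} (hu : IsFree S T u) :
    IsFree S T (Sum.elim u (0 : κ → Series σ)) := fun y y' => by
  obtain ⟨z, hz1, hz2⟩ := hu y y'
  refine ⟨Sum.elim z 0, fun i hi => ?_, fun i hi j hj => ?_⟩
  · rw [← hz1 i hi]
    simp only [comp_sumElim_zero, sumElim_dotProduct_sumElim, dotProduct_zero, add_zero]
  · rw [← hz2 i hi j hj]
    simp only [comp_sumElim_zero, sumElim_dotProduct_sumElim, dotProduct_zero, add_zero]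

theorem jetMatrix_sumElim_zero_mulVec {κ : Type*} [Fintype κ] (u : ι → Series σ) (x : κ → ℝ) :
    (jetMatrix S T (Sum.elim u (0 : κ → Series σ))).map constantCoeff *ᵥ Sum.elim 0 x = 0 :=
  funext fun k => by
    change (constantCoeff ∘ jetOp S T k ∘ Sum.elim u 0) ⬝ᵥ Sum.elim 0 x = 0
    rw [comp_sumElim_zero, comp_sumElim_zero, sumElim_dotProduct_sumElim, dotProduct_zero,
      zero_dotProduct, add_zero]

/-- The system is solved near the normal vector `(0, 1)` of `(u, 0)`. -/
theorem exists_normal_field {u : ι → Series σ} (hu : ∀ a, u a ∈ convergent σ)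
    (hfree : IsFree S T u) {b : σ → Series σ} (hb : ∀ i, b i ∈ convergent σ)
    (hb0 : ∀ i ∈ S, constantCoeff (b i) = 0) {c : σ → σ → Series σ}
    (hc : ∀ i j, c i j ∈ convergent σ) (hcsymm : ∀ i j, c i j = c j i)
    (hc0 : ∀ i ∈ T, ∀ j ∈ T, constantCoeff (c i j) = 0) {G : Series σ} (hG : G ∈ convergent σ)
    (hG0 : constantCoeff G = 1) :
    ∃ z : ι ⊕ Unit → Series σ, (∀ a, z a ∈ convergent σ) ∧
      (∀ i ∈ S, (pd i ∘ Sum.elim u 0) ⬝ᵥ z = b i) ∧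
      (∀ i ∈ T, ∀ j ∈ T, (pd i ∘ pd j ∘ Sum.elim u 0) ⬝ᵥ z = c i j) ∧ z ⬝ᵥ z = G := by
  classical
  let n : ι ⊕ Unit → ℝ := Sum.elim 0 1
  have hAn := jetMatrix_sumElim_zero_mulVec (S := S) (T := T) u (1 : Unit → ℝ)
  have hnn : n ⬝ᵥ n = 1 := by
    rw [sumElim_dotProduct_sumElim, dotProduct_zero, dotProduct_one, zero_add]
    exact Fintype.sum_unique _
  have hconv : ∀ a, (Sum.elim u 0 : ι ⊕ Unit → Series σ) a ∈ convergent σ :=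
    Sum.rec hu fun _ => zero_mem _
  obtain ⟨z, hz, hAz, hzz⟩ := exists_convergent_solution (jetMatrix_mem_convergent hconv)
    (ρ := Sum.elim (fun i : S => b i) fun q : Sym2 T => c (orderedPair q).1 (orderedPair q).2)
    (Sum.rec (fun i => hb i) fun q => hc _ _) hG (n := n)
    (hAn.trans (funext (Sum.rec (fun i => (hb0 i i.2).symm)
      fun q => (hc0 _ (orderedPair_fst_mem q) _ (orderedPair_snd_mem q)).symm)))
    (hnn.trans hG0.symm)
    (surjective_fromRows_mulVec hfree.sumElim_zero.surjective_jetMatrix hAn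
      (hnn.trans_ne one_ne_zero))
  obtain ⟨hS, hT⟩ := (jetMatrix_mulVec_eq_iff hcsymm).1 hAz
  exact ⟨z, hz, hS, hT, hzz⟩

/-- The velocity with which the hypersurface `u₀`, placed in one more dimension, has to be moved
in the direction `t`. -/
theorem exists_normal_velocity [DecidableEq σ] (ht : t ∉ S) (hg : IsFlat g) {u₀ : ι → Series σ}
    (hu₀ : ∀ a, u₀ a ∈ convergent σ) (hr : restr t ∘ u₀ = u₀) (hfree : IsFree S S u₀) :
    ∃ u₁ : ι ⊕ Unit → Series σ, (∀ a, u₁ a ∈ convergent σ) ∧ restr t ∘ u₁ = u₁ ∧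
      (∀ i ∈ S, (pd i ∘ Sum.elim u₀ 0) ⬝ᵥ u₁ = restr t (g i t)) ∧
      (∀ i ∈ S, ∀ j ∈ S, (pd i ∘ pd j ∘ Sum.elim u₀ 0) ⬝ᵥ u₁ = restr t (christoffel g i j t)) ∧
      u₁ ⬝ᵥ u₁ = restr t (g t t) := by
  have hne : ∀ i ∈ S, i ≠ t := fun i hi => ne_of_mem_of_not_mem hi ht
  obtain ⟨z, hz, h1, h2, hzz⟩ := exists_normal_field hu₀ hfree
    (fun i => hg.mem_convergent i t)
    (fun i hi => by rw [hg.constantCoeff_apply, one_apply_ne (hne i hi)])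
    (fun i j => christoffel_mem_convergent hg.mem_convergent i j t)
    (fun i j => christoffel_comm hg.isSymm i j t)
    (fun i _ j _ => hg.constantCoeff_christoffel i j t) (hg.mem_convergent t t)
    (by rw [hg.constantCoeff_apply, one_apply_eq])
  have hrN : restr t ∘ (Sum.elim u₀ 0 : ι ⊕ Unit → Series σ) = Sum.elim u₀ 0 := by
    rw [comp_sumElim_zero, hr]
  have hrpd : ∀ i ∈ S, ∀ v : ι ⊕ Unit → Series σ, restr t ∘ v = v →
      restr t ∘ pd i ∘ v = pd i ∘ v := fun i hi v hv => by
    rw [← pd_restr_comp_comm (hne i hi), hv]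
  refine ⟨restr t ∘ z, fun a => restr_mem_convergent t (hz a), funext fun a => restr_restr t _,
    fun i hi => ?_, fun i hi j hj => ?_, ?_⟩
  · rw [← h1 i hi, restr_dotProduct, hrpd i hi _ hrN]
  · rw [← h2 i hi j hj, restr_dotProduct, hrpd i hi _ (hrpd j hj _ hrN)]
  · rw [← hzz, restr_dotProduct]

theorem IsFree.insert_of_isFlat [DecidableEq σ] (ht : t ∉ S) (hg : IsFlat g)
    {u : ι → Series σ} (hu : IsFree S S u)
    (hmetric : ∀ i ∈ insert t S, restr t (induced u i t) = restr t (g i t))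
    (hchrist : ∀ i ∈ S, ∀ j ∈ S,
      restr t (christoffel (induced u) i j t) = restr t (christoffel g i j t)) :
    IsFree (insert t S) S u := by
  have hmetric0 : ∀ i ∈ insert t S, (constantCoeff ∘ pd i ∘ u) ⬝ᵥ (constantCoeff ∘ pd t ∘ u) =
      (1 : Matrix σ σ ℝ) i t := fun i hi => by
    rw [← constantCoeff_dotProduct, ← induced_apply, ← constantCoeff_restr t, hmetric i hi,
      constantCoeff_restr, hg.constantCoeff_apply]
  refine hu.insert_of_orthogonal (fun i hi => ?_) (fun i hi j hj => ?_) ?_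
  · rw [hmetric0 i (Finset.mem_insert_of_mem hi), one_apply_ne (ne_of_mem_of_not_mem hi ht)]
  · rw [← constantCoeff_dotProduct, ← christoffel_induced, ← constantCoeff_restr t,
      hchrist i hi j hj, constantCoeff_restr, hg.constantCoeff_christoffel]
  · rw [hmetric0 t (Finset.mem_insert_self t S), one_apply_eq]
    exact one_ne_zero

theorem exists_first_order_extension [DecidableEq σ] (ht : t ∉ S) (hg : IsFlat g)
    {u₀ : ι → Series σ} (hu₀ : ∀ a, u₀ a ∈ convergent σ) (hr : restr t ∘ u₀ = u₀)
    (hfree : IsFree S S u₀) (hind : ∀ i ∈ S, ∀ j ∈ S, induced u₀ i j = restr t (g i j)) :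
    ∃ U : ι ⊕ Unit → Series σ, (∀ a, U a ∈ convergent σ) ∧ pd t ∘ pd t ∘ U = 0 ∧ IsFree S S U ∧
      (∀ i ∈ insert t S, ∀ j ∈ insert t S, restr t (induced U i j) = restr t (g i j)) ∧
      ∀ i ∈ S, ∀ j ∈ S,
        restr t (christoffel (induced U) i j t) = restr t (christoffel g i j t) := by
  obtain ⟨u₁, hu₁, hru₁, hone, htwo, hlen⟩ := exists_normal_velocity ht hg hu₀ hr hfree
  have hne : ∀ i ∈ S, i ≠ t := fun i hi => ne_of_mem_of_not_mem hi ht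
  let N : ι ⊕ Unit → Series σ := Sum.elim u₀ 0
  have hrN : restr t ∘ N = N := by rw [comp_sumElim_zero, hr]
  let U := N + integ t ∘ u₁
  have hUt : pd t ∘ U = u₁ := by
    rw [map_comp_add, pd_comp_eq_zero_of_restr_comp hrN, pd_integ_comp_self, zero_add]
  have hrU : restr t ∘ U = restr t ∘ N := by rw [map_comp_add, restr_integ_comp, add_zero]
  have hUj : ∀ j ∈ S, restr t ∘ pd j ∘ U = pd j ∘ N := fun j hj => by
    rw [restr_pd_comp_congr (hne j hj) hrU, restr_pd_comp_of_restr_comp (hne j hj) hrN]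
  have hUij : ∀ i ∈ S, ∀ j ∈ S, restr t ∘ pd i ∘ pd j ∘ U = pd i ∘ pd j ∘ N := fun i hi j hj => by
    rw [← pd_restr_comp_comm (hne i hi), hUj j hj]
  have hUit : ∀ i ∈ S, restr t (induced U i t) = restr t (g i t) := fun i hi => by
    rw [induced_apply, restr_dotProduct, hUj i hi, hUt, hru₁, hone i hi]
  have hconv : ∀ a, N a ∈ convergent σ := Sum.rec hu₀ fun _ => zero_mem _
  refine ⟨U, fun a => add_mem (hconv a) (integ_mem_convergent t (hu₁ a)), ?_,
    hfree.sumElim_zero.congr (fun i hi => ?_) (fun i hi j hj => ?_), fun i hi j hj => ?_,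
    fun i hi j hj => ?_⟩
  · rw [hUt, pd_comp_eq_zero_of_restr_comp hru₁]
  · rw [← hUj i hi, constantCoeff_restr_comp]
  · rw [← hUij i hi j hj, constantCoeff_restr_comp]
  · rcases Finset.mem_insert.1 hi with rfl | hi <;> rcases Finset.mem_insert.1 hj with rfl | hj
    · rw [induced_apply, restr_dotProduct, hUt, hru₁, hlen]
    · rw [(induced_isSymm U).apply, hg.isSymm.apply, hUit j hj]
    · exact hUit i ‹i ∈ S›
    · rw [induced_apply, restr_dotProduct, hUj i hi, hUj j hj, ← hind i hi j hj, comp_sumElim_zero,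
        comp_sumElim_zero, sumElim_dotProduct_sumElim, dotProduct_zero, add_zero, induced_apply]
  · rw [christoffel_induced, restr_dotProduct, hUij i hi j hj, hUt, hru₁, htwo i hi j hj]

theorem exists_extension_of_isFree [DecidableEq σ] (ht : t ∉ S) (hg : IsFlat g)
    {u₀ : ι → Series σ} (hu₀ : ∀ a, u₀ a ∈ convergent σ) (hr : restr t ∘ u₀ = u₀)
    (hfree : IsFree S S u₀) (hind : ∀ i ∈ S, ∀ j ∈ S, induced u₀ i j = restr t (g i j)) :
    ∃ u : ι ⊕ Unit → Series σ, (∀ a, u a ∈ convergent σ) ∧ IsFree (insert t S) S u ∧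
      ∀ i ∈ insert t S, ∀ j ∈ insert t S, induced u i j = g i j := by
  obtain ⟨U, hU, hUtt, hUfree, hmetric, hchrist⟩ :=
    exists_first_order_extension ht hg hu₀ hr hfree hind
  exact exists_isometric_extension ht hg.isSymm hg.mem_convergent hU hUtt
    (hUfree.insert_of_isFlat ht hg (fun i hi => hmetric i hi t (Finset.mem_insert_self t S))
      hchrist) hmetric hchrist

end Induction

universe u

section Hypersurface

theorem pd_X [DecidableEq σ] (i a : σ) :
    pd i (MvPowerSeries.X a : Series σ) = MvPowerSeries.C ((1 : Matrix σ σ ℝ) i a) := by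
  rcases eq_or_ne i a with rfl | h
  · rw [one_apply_eq, map_one]
    exact MvPowerSeries.pderiv_X_self
  · rw [one_apply_ne h, map_zero]
    exact MvPowerSeries.pderiv_X_of_ne h.symm

theorem pd_C (i : σ) (c : ℝ) : pd i (MvPowerSeries.C c : Series σ) = 0 :=
  MvPowerSeries.pderiv_C

theorem restr_X {a t : σ} (h : a ≠ t) :
    restr t (MvPowerSeries.X a : Series σ) = MvPowerSeries.X a := by
  classical
  ext α
  rw [coeff_restr, ite_eq_left_iff, MvPowerSeries.coeff_X]
  rintro hα
  rw [if_neg]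
  rintro rfl
  exact hα (Finsupp.single_eq_of_ne h.symm)

variable {s t : σ} {S T : Finset σ}

/-- The quadratic monomials `xₐxₛ`, `a ∈ S`, which free the second derivatives in the
direction `s`. -/
def quadrics (S : Finset σ) (s : σ) (a : S) : Series σ :=
  MvPowerSeries.X a.1 * MvPowerSeries.X s

theorem quadrics_mem_convergent (a : S) : quadrics S s a ∈ convergent σ :=
  mul_mem (X_mem_convergent _) (X_mem_convergent _)

theorem restr_comp_quadrics (ht : t ∉ S) (hs : S.Nonempty → s ∈ S) :
    restr t ∘ quadrics S s = quadrics S s := funext fun a => by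
  change restr t (_ * _) = _
  rw [map_mul, restr_X (ne_of_mem_of_not_mem a.2 ht),
    restr_X (ne_of_mem_of_not_mem (hs ⟨a, a.2⟩) ht), quadrics]

theorem constantCoeff_pd_quadrics (i : σ) : constantCoeff ∘ pd i ∘ quadrics S s = 0 :=
  funext fun a => by
    change constantCoeff (pd i (_ * _)) = 0
    rw [pd_mul, map_add, map_mul, map_mul, MvPowerSeries.constantCoeff_X,
      MvPowerSeries.constantCoeff_X, mul_zero, zero_mul, add_zero]

theorem constantCoeff_pd_pd_quadrics [DecidableEq σ] (i j : σ) (a : S) :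
    constantCoeff (pd i (pd j (quadrics S s a))) =
      (1 : Matrix σ σ ℝ) j a * (1 : Matrix σ σ ℝ) i s +
        (1 : Matrix σ σ ℝ) i a * (1 : Matrix σ σ ℝ) j s := by
  simp only [quadrics, pd_mul, pd_X, pd_C, map_add, map_mul,
    MvPowerSeries.constantCoeff_C, MvPowerSeries.constantCoeff_X]
  ring

variable [Fintype ι]

theorem induced_restr_comp {i j : σ} (hi : i ≠ t) (hj : j ≠ t) (u : ι → Series σ) :
    induced (restr t ∘ u) i j = restr t (induced u i j) := by
  rw [induced_apply, induced_apply, restr_dotProduct, pd_restr_comp_comm hi, pd_restr_comp_comm hj]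

theorem constantCoeff_pd_induced {u : ι → Series σ} (hu : ∀ i, constantCoeff ∘ pd i ∘ u = 0)
    (i j k : σ) : constantCoeff (pd k (induced u i j)) = 0 := by
  rw [induced_apply, pd_dotProduct, map_add, constantCoeff_dotProduct, constantCoeff_dotProduct,
    hu, hu, dotProduct_zero, zero_dotProduct, add_zero]

variable [DecidableEq σ]

theorem quadrics_dotProduct {i j : σ} (hi : i ∈ S) (hj : j ∈ S) (w : σ → ℝ) :
    (constantCoeff ∘ pd i ∘ pd j ∘ quadrics S s) ⬝ᵥ (w ∘ (↑)) =
      (1 : Matrix σ σ ℝ) i s * w j + (1 : Matrix σ σ ℝ) j s * w i := by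
  refine (Finset.sum_congr rfl fun a _ => congrArg (· * _)
    (constantCoeff_pd_pd_quadrics i j a)).trans ?_
  simp only [Function.comp_apply]
  rw [Finset.sum_coe_sort S fun a => ((1 : Matrix σ σ ℝ) j a * (1 : Matrix σ σ ℝ) i s +
    (1 : Matrix σ σ ℝ) i a * (1 : Matrix σ σ ℝ) j s) * w a]
  simp only [one_apply, add_mul, Finset.sum_add_distrib, ite_mul, one_mul, zero_mul,
    Finset.sum_ite_eq, hi, hj, if_true]

theorem exists_quadrics_dotProduct_eq (S : Finset σ) (s : σ) (y : σ → ℝ) :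
    ∃ z : S → ℝ, ∀ i ∈ S, ∀ j ∈ S, (constantCoeff ∘ pd i ∘ pd j ∘ quadrics S s) ⬝ᵥ z =
      if i = s then y j else if j = s then y i else 0 := by
  refine ⟨(fun a => y a / if a = s then 2 else 1) ∘ (↑), fun i hi j hj => ?_⟩
  rw [quadrics_dotProduct hi hj, one_apply, one_apply]
  split_ifs with his hjs
  · rw [his, hjs]
    ring
  all_goals ring

theorem IsFree.sumElim_quadrics {v : ι → Series σ} (hv : IsFree S T v) (ht : t ∉ S)
    (hST : S ⊆ insert s T) :
    IsFree S S (Sum.elim (restr t ∘ v) (quadrics S s)) := fun y y' => by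
  obtain ⟨z, hz, hz'⟩ := hv y y'
  obtain ⟨x, hx⟩ := exists_quadrics_dotProduct_eq S s fun a =>
    y' s(s, a) - (constantCoeff ∘ pd s ∘ pd a ∘ restr t ∘ v) ⬝ᵥ z
  have hne : ∀ i ∈ S, i ≠ t := fun i hi => ne_of_mem_of_not_mem hi ht
  refine ⟨Sum.elim z x, fun i hi => ?_, fun i hi j hj => ?_⟩
  · simp only [Sum.comp_elim]
    rw [constantCoeff_pd_quadrics, sumElim_dotProduct_sumElim, zero_dotProduct, add_zero,
      pd_restr_comp_comm (hne i hi), constantCoeff_restr_comp, hz i hi]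
  · simp only [Sum.comp_elim]
    rw [sumElim_dotProduct_sumElim, hx i hi j hj]
    split_ifs with his hjs
    · rw [his, add_sub_cancel]
    · rw [hjs, pd_comp_comm i s, Sym2.eq_swap, add_sub_cancel]
    · rw [pd_restr_comp_comm (hne j hj), pd_restr_comp_comm (hne i hi), constantCoeff_restr_comp,
        hz' i (Finset.mem_of_mem_insert_of_ne (hST hi) his) j
          (Finset.mem_of_mem_insert_of_ne (hST hj) hjs), add_zero]

theorem IsFlat.restr_sub_induced {g : Matrix σ σ (Series σ)} (hg : IsFlat g) (t : σ)
    {u : ι → Series σ} (hu : ∀ a, u a ∈ convergent σ) (hu' : ∀ i, constantCoeff ∘ pd i ∘ u = 0) :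
    IsFlat (g.map (restr t) - induced u) where
  isSymm := (hg.isSymm.map _).sub (induced_isSymm u)
  mem_convergent i j := sub_mem (restr_mem_convergent t (hg.mem_convergent i j))
    (dotProduct_mem_convergent (fun a => pd_mem_convergent i (hu a))
      fun a => pd_mem_convergent j (hu a))
  constantCoeff_eq := by
    ext i j
    rw [Matrix.map_apply, Matrix.sub_apply, Matrix.map_apply, map_sub, constantCoeff_restr,
      hg.constantCoeff_apply, induced_apply, constantCoeff_dotProduct, hu', zero_dotProduct,
      sub_zero]
  constantCoeff_pd i j k := by
    rw [Matrix.sub_apply, map_sub, map_sub, constantCoeff_pd_induced hu', Matrix.map_apply,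
      sub_zero]
    by_cases hk : k = t
    · rw [hk, pd_restr_self, map_zero]
    · rw [pd_restr_comm hk, constantCoeff_restr, hg.constantCoeff_pd]

/-- The metric `g` has, on the coordinates `S` and in the Janet dimension, a convergent isometric
immersion which is free in the sense of `IsFree S T`. -/
def Realizable {σ : Type u} (S T : Finset σ) (g : Matrix σ σ (Series σ)) : Prop :=
  ∃ (ι : Type u) (_ : Fintype ι) (u : ι → Series σ),
    Fintype.card ι = S.card * (S.card + 1) / 2 ∧ (∀ a, u a ∈ convergent σ) ∧ IsFree S T u ∧
      ∀ i ∈ S, ∀ j ∈ S, induced u i j = g i j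

theorem realizable_empty {σ : Type u} (g : Matrix σ σ (Series σ)) : Realizable ∅ ∅ g :=
  ⟨PEmpty, inferInstance, 0, by rw [Fintype.card_pempty, Finset.card_empty, zero_mul, Nat.zero_div],
    nofun, fun _ _ => ⟨0, nofun, nofun⟩, nofun⟩

theorem card_mul_succ_div_two (n : ℕ) : n * (n + 1) / 2 + n + 1 = (n + 1) * (n + 1 + 1) / 2 := by
  have hsucc : (n + 1) * (n + 1 + 1) = n * (n + 1) + (n + 1) * 2 := by ring
  rw [hsucc, Nat.add_mul_div_right _ _ two_pos, add_assoc]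

/-- On the hyperplane `t = 0`, split off the quadrics `f` from the metric, realize
`g - ⟨∂f, ∂f⟩` by `v`, and extend `(v, f)` off the hyperplane. -/
theorem Realizable.insert_of_forall_isFlat {σ : Type u} [DecidableEq σ] {s t : σ} {S T : Finset σ}
    (h : ∀ g, IsFlat g → Realizable S T g) (hST : S ⊆ insert s T) (hs : S.Nonempty → s ∈ S)
    (ht : t ∉ S) {g : Matrix σ σ (Series σ)} (hg : IsFlat g) : Realizable (insert t S) S g := by
  obtain ⟨ι, _, v, hcard, hv, hfree, hind⟩ := h _
    (hg.restr_sub_induced t (quadrics_mem_convergent (S := S) (s := s)) constantCoeff_pd_quadrics)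
  have hne : ∀ i ∈ S, i ≠ t := fun i hi => ne_of_mem_of_not_mem hi ht
  have hr := restr_comp_quadrics ht hs
  have hrv : restr t ∘ restr t ∘ v = restr t ∘ v := funext fun a => restr_restr t (v a)
  have hrq : ∀ i ∈ S, ∀ j ∈ S, restr t (induced (quadrics S s) i j) = induced (quadrics S s) i j :=
    fun i hi j hj => by rw [← induced_restr_comp (hne i hi) (hne j hj), hr]
  obtain ⟨u, hu, hufree, huind⟩ := exists_extension_of_isFree ht hg
    (u₀ := Sum.elim (restr t ∘ v) (quadrics S s))
    (Sum.rec (fun a => restr_mem_convergent t (hv a)) quadrics_mem_convergent)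
    (by rw [Sum.comp_elim, hr, hrv])
    (hfree.sumElim_quadrics ht hST) fun i hi j hj => by
      rw [induced_sumElim, Matrix.add_apply, induced_restr_comp (hne i hi) (hne j hj),
        hind i hi j hj, Matrix.sub_apply, map_sub, hrq i hi j hj, Matrix.map_apply, restr_restr,
        sub_add_cancel]
  refine ⟨(ι ⊕ S) ⊕ Unit, inferInstance, u, ?_, hu, hufree, huind⟩
  rw [Fintype.card_sum, Fintype.card_sum, hcard, Fintype.card_coe, Fintype.card_unit,
    Finset.card_insert_of_notMem ht, card_mul_succ_div_two]

theorem realizable_insert {σ : Type u} [DecidableEq σ] {S : Finset σ} :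
    ∀ {t : σ}, t ∉ S → ∀ {g : Matrix σ σ (Series σ)}, IsFlat g → Realizable (insert t S) S g := by
  induction S using Finset.induction_on with
  | empty =>
    exact fun {t} ht _ hg => Realizable.insert_of_forall_isFlat (s := t)
      (fun g _ => realizable_empty g) (Finset.empty_subset _) (by simp) ht hg
  | insert s S hs ih =>
    exact fun ht _ hg => Realizable.insert_of_forall_isFlat (fun g hg => ih hs hg) subset_rfl
      (fun _ => Finset.mem_insert_self s S) ht hg

end Hypersurface

/-! ### Evaluation of convergent power series -/

section Evaluation

variable [Fintype σ]

/-- The value of the monomial with exponent `α`. -/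
def monomialAt (α : σ →₀ ℕ) (x : EuclideanSpace ℝ σ) : ℝ := ∏ i, x i ^ α i

theorem monomialAt_zero (x : EuclideanSpace ℝ σ) : monomialAt 0 x = 1 :=
  Finset.prod_eq_one fun i _ => pow_zero (x i)

theorem monomialAt_add (α β : σ →₀ ℕ) (x : EuclideanSpace ℝ σ) :
    monomialAt (α + β) x = monomialAt α x * monomialAt β x := by
  simp only [monomialAt, Finsupp.add_apply, pow_add, Finset.prod_mul_distrib]

theorem monomialAt_single (i : σ) (n : ℕ) (x : EuclideanSpace ℝ σ) :
    monomialAt (Finsupp.single i n) x = x i ^ n := by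
  rw [monomialAt, Finset.prod_eq_single i, Finsupp.single_eq_same]
  · intro j _ hj
    rw [Finsupp.single_eq_of_ne hj, pow_zero]
  · exact fun hi => absurd (Finset.mem_univ i) hi

theorem norm_monomialAt_le (α : σ →₀ ℕ) (x : EuclideanSpace ℝ σ) :
    ‖monomialAt α x‖ ≤ ‖x‖ ^ α.degree := by
  rw [monomialAt, norm_prod, Finsupp.degree_eq_sum, ← Finset.prod_pow_eq_pow_sum]
  refine Finset.prod_le_prod (fun _ _ => norm_nonneg _) fun i _ => ?_
  rw [norm_pow]
  exact pow_le_pow_left₀ (norm_nonneg _) (PiLp.norm_apply_le x i) _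

theorem enorm_monomialAt_le {r : ℝ≥0} {x : EuclideanSpace ℝ σ} (hx : ‖x‖ ≤ r) (α : σ →₀ ℕ) :
    ‖monomialAt α x‖ₑ ≤ radialWeight r α := by
  have h : ‖monomialAt α x‖ ≤ (r : ℝ) ^ α.degree :=
    (norm_monomialAt_le α x).trans (pow_le_pow_left₀ (norm_nonneg x) hx _)
  rw [radialWeight, ← ENNReal.coe_pow]
  exact_mod_cast (show ‖monomialAt α x‖₊ ≤ r ^ α.degree by exact_mod_cast h)

/-- The sum of a power series at a point, `0` where it does not converge absolutely. -/
def evalAt (f : Series σ) (x : EuclideanSpace ℝ σ) : ℝ := ∑' α, coeff α f * monomialAt α x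

theorem summable_norm_of_tsum_enorm_ne_top {α : Type*} {a : α → ℝ} (h : ∑' i, ‖a i‖ₑ ≠ ∞) :
    Summable fun i => ‖a i‖ := by
  simpa only [toReal_enorm] using ENNReal.summable_toReal h

theorem summable_norm_evalAt {f : Series σ} {r : ℝ≥0} (hf : wnorm (radialWeight r) f ≠ ∞)
    {x : EuclideanSpace ℝ σ} (hx : ‖x‖ ≤ r) :
    Summable fun α => ‖coeff α f * monomialAt α x‖ := by
  refine summable_norm_of_tsum_enorm_ne_top (ne_top_of_le_ne_top hf
    (ENNReal.tsum_le_tsum fun α => ?_))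
  rw [enorm_mul]
  gcongr
  exact enorm_monomialAt_le hx α

theorem eventually_summable_norm_evalAt {f : Series σ} (hf : f ∈ convergent σ) :
    ∀ᶠ x in 𝓝 (0 : EuclideanSpace ℝ σ), Summable fun α => ‖coeff α f * monomialAt α x‖ := by
  obtain ⟨r, hr, hfr⟩ := exists_wnorm_ne_top hf
  filter_upwards [Metric.closedBall_mem_nhds 0 (NNReal.coe_pos.2 hr)] with x hx
  exact summable_norm_evalAt hfr (mem_closedBall_zero_iff.1 hx)

theorem evalAt_zero_right (f : Series σ) : evalAt f 0 = constantCoeff f := by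
  rw [evalAt, tsum_eq_single 0, monomialAt_zero, mul_one,
    MvPowerSeries.coeff_zero_eq_constantCoeff_apply]
  intro α hα
  obtain ⟨i, hi⟩ := Finsupp.ne_iff.1 hα
  rw [monomialAt, Finset.prod_eq_zero (Finset.mem_univ i) (zero_pow hi), mul_zero]

theorem evalAt_add {f g : Series σ} {x : EuclideanSpace ℝ σ}
    (hf : Summable fun α => ‖coeff α f * monomialAt α x‖)
    (hg : Summable fun α => ‖coeff α g * monomialAt α x‖) :
    evalAt (f + g) x = evalAt f x + evalAt g x := by
  unfold evalAt
  rw [← hf.of_norm.tsum_add hg.of_norm]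
  simp only [map_add, add_mul]

theorem evalAt_mul {f g : Series σ} {x : EuclideanSpace ℝ σ}
    (hf : Summable fun α => ‖coeff α f * monomialAt α x‖)
    (hg : Summable fun α => ‖coeff α g * monomialAt α x‖) :
    evalAt (f * g) x = evalAt f x * evalAt g x := by
  classical
  refine Eq.trans (tsum_congr fun α => ?_) (Summable.tsum_mul_tsum_eq_tsum_sum_antidiagonal
    (f := fun α => coeff α f * monomialAt α x) (g := fun α => coeff α g * monomialAt α x)
    hf.of_norm hg.of_norm (summable_mul_of_summable_norm
      (f := fun α => coeff α f * monomialAt α x) (g := fun α => coeff α g * monomialAt α x)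
      hf hg)).symm
  rw [coeff_mul, Finset.sum_mul]
  refine Finset.sum_congr rfl fun p hp => ?_
  rw [← mem_antidiagonal.1 hp, monomialAt_add, mul_mul_mul_comm]

theorem eventually_evalAt_sum (s : Finset ι) {f : ι → Series σ} (hf : ∀ a, f a ∈ convergent σ) :
    ∀ᶠ x in 𝓝 (0 : EuclideanSpace ℝ σ), evalAt (∑ a ∈ s, f a) x = ∑ a ∈ s, evalAt (f a) x := by
  classical
  induction s using Finset.induction_on with
  | empty => simp [evalAt]
  | insert a s ha ih =>
    filter_upwards [ih, eventually_summable_norm_evalAt (hf a),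
      eventually_summable_norm_evalAt ((convergent σ).sum_mem (t := s) fun a _ => hf a)]
      with x ih hfa hsum
    rw [Finset.sum_insert ha, Finset.sum_insert ha, evalAt_add hfa hsum, ih]

theorem eventually_evalAt_dotProduct [Fintype ι] {u v : ι → Series σ}
    (hu : ∀ a, u a ∈ convergent σ) (hv : ∀ a, v a ∈ convergent σ) :
    ∀ᶠ x in 𝓝 (0 : EuclideanSpace ℝ σ),
      evalAt (u ⬝ᵥ v) x = (fun a => evalAt (u a) x) ⬝ᵥ fun a => evalAt (v a) x := by
  filter_upwards [eventually_evalAt_sum Finset.univ fun a => mul_mem (hu a) (hv a),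
    Filter.eventually_all.2 fun a => eventually_summable_norm_evalAt (hu a),
    Filter.eventually_all.2 fun a => eventually_summable_norm_evalAt (hv a)] with x hsum hua hva
  rw [dotProduct, hsum]
  exact Finset.sum_congr rfl fun a _ => evalAt_mul (hua a) (hva a)

end Evaluation

/-! ### Analytic functions and convergent power series -/

/-- The exponent of the monomial spelled by a word in the variables. -/
def wordExponent (w : Σ n, Fin n → σ) : σ →₀ ℕ := ∑ k, Finsupp.single (w.2 k) 1

theorem degree_wordExponent (w : Σ n, Fin n → σ) : (wordExponent w).degree = w.1 := by
  simp [wordExponent]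

theorem wordExponent_surjective : Function.Surjective (wordExponent (σ := σ)) := by
  intro α
  induction α using Finsupp.induction_linear with
  | zero => exact ⟨⟨0, Fin.elim0⟩, by simp [wordExponent]⟩
  | add α β hα hβ =>
    obtain ⟨⟨m, v⟩, rfl⟩ := hα
    obtain ⟨⟨n, w⟩, rfl⟩ := hβ
    exact ⟨⟨m + n, Fin.append v w⟩, by simp [wordExponent, Fin.sum_univ_add]⟩
  | single i n => exact ⟨⟨n, fun _ => i⟩, by simp [wordExponent]⟩

theorem radialWeight_wordExponent (r : ℝ≥0) (w : Σ n, Fin n → σ) :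
    radialWeight r (wordExponent w) = (r : ℝ≥0∞) ^ w.1 := by
  rw [radialWeight, degree_wordExponent]

/-- The product of the coordinates selected by a word, as a multilinear form. -/
def wordForm {n : ℕ} (w : Fin n → σ) :
    ContinuousMultilinearMap ℝ (fun _ : Fin n => EuclideanSpace ℝ σ) ℝ :=
  (ContinuousMultilinearMap.mkPiAlgebra ℝ (Fin n) ℝ).compContinuousLinearMap
    fun k => EuclideanSpace.proj (w k)

theorem wordForm_apply {n : ℕ} (w : Fin n → σ) (x : Fin n → EuclideanSpace ℝ σ) :
    wordForm w x = ∏ k, x k (w k) := rfl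

/-- The power series obtained by adding up the coefficients of all words with equal exponent. -/
def collect (c : (Σ n, Fin n → σ) → ℝ) : Series σ := fun α => ∑' w : wordExponent ⁻¹' {α}, c w

theorem wnorm_collect_le (c : (Σ n, Fin n → σ) → ℝ) (r : ℝ≥0) :
    wnorm (radialWeight r) (collect c) ≤ ∑' w, ‖c w‖ₑ * (r : ℝ≥0∞) ^ w.1 := by
  rw [← ENNReal.tsum_fiberwise _ wordExponent]
  refine ENNReal.tsum_le_tsum fun α => ?_
  calc
    _ ≤ (∑' w : wordExponent ⁻¹' {α}, ‖c w‖ₑ) * radialWeight r α := by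
      gcongr
      exact enorm_tsum_le_tsum_enorm
    _ = _ := by
      rw [← ENNReal.tsum_mul_right]
      exact tsum_congr fun w => by rw [← radialWeight_wordExponent, w.2]

section Words

variable [Fintype σ]

theorem monomialAt_sum (s : Finset ι) (α : ι → σ →₀ ℕ) (x : EuclideanSpace ℝ σ) :
    monomialAt (∑ k ∈ s, α k) x = ∏ k ∈ s, monomialAt (α k) x := by
  classical
  induction s using Finset.induction_on with
  | empty => rw [Finset.sum_empty, Finset.prod_empty, monomialAt_zero]
  | insert a s ha ih => rw [Finset.sum_insert ha, Finset.prod_insert ha, monomialAt_add, ih]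

theorem monomialAt_wordExponent (w : Σ n, Fin n → σ) (x : EuclideanSpace ℝ σ) :
    monomialAt (wordExponent w) x = ∏ k, x (w.2 k) := by
  simp only [wordExponent, monomialAt_sum, monomialAt_single, pow_one]

theorem norm_wordForm_le {n : ℕ} (w : Fin n → σ) : ‖wordForm w‖ ≤ 1 := by
  refine ContinuousMultilinearMap.opNorm_le_bound zero_le_one fun x => ?_
  rw [wordForm_apply, one_mul, norm_prod]
  exact Finset.prod_le_prod (fun _ _ => norm_nonneg _) fun k _ => PiLp.norm_apply_le _ _

theorem summable_words {c : (Σ n, Fin n → σ) → ℝ} {r : ℝ≥0}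
    (hc : ∑' w, ‖c w‖ₑ * (r : ℝ≥0∞) ^ w.1 ≠ ∞) {x : EuclideanSpace ℝ σ} (hx : ‖x‖ ≤ r) :
    Summable fun w => c w * monomialAt (wordExponent w) x := by
  refine (summable_norm_of_tsum_enorm_ne_top (ne_top_of_le_ne_top hc
    (ENNReal.tsum_le_tsum fun w => ?_))).of_norm
  rw [enorm_mul, ← radialWeight_wordExponent]
  gcongr
  exact enorm_monomialAt_le hx _

/-- The formal multilinear series of a family of coefficients indexed by words. -/
def wordSeries (c : (Σ n, Fin n → σ) → ℝ) : FormalMultilinearSeries ℝ (EuclideanSpace ℝ σ) ℝ :=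
  fun n => ∑ w : Fin n → σ, c ⟨n, w⟩ • wordForm w

theorem wordSeries_apply_const (c : (Σ n, Fin n → σ) → ℝ) (n : ℕ) (x : EuclideanSpace ℝ σ) :
    (wordSeries c n fun _ => x) =
      ∑ w : Fin n → σ, c ⟨n, w⟩ * monomialAt (wordExponent ⟨n, w⟩) x := by
  simp only [wordSeries, _root_.sum_apply, _root_.smul_apply, wordForm_apply, smul_eq_mul,
    monomialAt_wordExponent]

theorem le_radius_wordSeries {c : (Σ n, Fin n → σ) → ℝ} {r : ℝ≥0}
    (hc : ∑' w, ‖c w‖ₑ * (r : ℝ≥0∞) ^ w.1 ≠ ∞) : (r : ℝ≥0∞) ≤ (wordSeries c).radius := by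
  have hsum : Summable fun w => ‖c w‖ * (r : ℝ) ^ w.1 :=
    (ENNReal.summable_toReal hc).congr fun w => by simp
  have hsum_degree := hsum.sigma
  simp only [tsum_fintype] at hsum_degree
  refine (wordSeries c).le_radius_of_summable
    (.of_nonneg_of_le (fun n => by positivity) (fun n => ?_) hsum_degree)
  rw [← Finset.sum_mul]
  gcongr
  refine (norm_sum_le _ _).trans (Finset.sum_le_sum fun w _ => ?_)
  rw [norm_smul]
  exact mul_le_of_le_one_right (norm_nonneg _) (norm_wordForm_le w)

theorem hasFPowerSeriesOnBall_wordSeries {c : (Σ n, Fin n → σ) → ℝ} {r : ℝ≥0} (hr : 0 < r)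
    (hc : ∑' w, ‖c w‖ₑ * (r : ℝ≥0∞) ^ w.1 ≠ ∞) :
    HasFPowerSeriesOnBall (fun x => ∑' w, c w * monomialAt (wordExponent w) x) (wordSeries c)
      0 r where
  r_le := le_radius_wordSeries hc
  r_pos := ENNReal.coe_pos.2 hr
  hasSum {x} hx := by
    rw [Metric.mem_eball, edist_zero_right, enorm_eq_nnnorm, ENNReal.coe_lt_coe] at hx
    simp only [wordSeries_apply_const, zero_add]
    exact (summable_words hc (NNReal.coe_le_coe.2 hx.le)).hasSum.sigma fun n => hasSum_fintype _

theorem analyticAt_evalAt {f : Series σ} (hf : f ∈ convergent σ) :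
    AnalyticAt ℝ (evalAt f) 0 := by
  obtain ⟨r, hr, hfr⟩ := exists_wnorm_ne_top hf
  obtain ⟨word, hword⟩ := wordExponent_surjective (σ := σ).hasRightInverse
  have hinj : Function.Injective word := hword.injective
  set c : (Σ n, Fin n → σ) → ℝ := Function.extend word (fun α => coeff α f) 0
  have hc_word (α : σ →₀ ℕ) : c (word α) = coeff α f := hinj.extend_apply _ _ α
  have hc_support : c.support ⊆ range word := Function.support_subset_iff'.2 fun w hw =>
    Function.extend_apply' _ _ _ hw
  have hevalAt : evalAt f = fun x => ∑' w, c w * monomialAt (wordExponent w) x := by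
    funext x
    rw [← hinj.tsum_eq ((Function.support_mul_subset_left _ _).trans hc_support)]
    exact tsum_congr fun α => by rw [hc_word, hword α]
  have hc_sum : ∑' w, ‖c w‖ₑ * (r : ℝ≥0∞) ^ w.1 = wnorm (radialWeight r) f := by
    rw [← hinj.tsum_eq]
    · exact tsum_congr fun α => by rw [hc_word, ← radialWeight_wordExponent, hword α]
    · refine (Function.support_mul_subset_left _ _).trans fun w hw => hc_support ?_
      exact enorm_ne_zero.1 hw
  rw [hevalAt]
  exact (hasFPowerSeriesOnBall_wordSeries hr (hc_sum ▸ hfr)).analyticAt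

theorem evalAt_collect {c : (Σ n, Fin n → σ) → ℝ} {x : EuclideanSpace ℝ σ}
    (hc : Summable fun w => c w * monomialAt (wordExponent w) x) :
    evalAt (collect c) x = ∑' w, c w * monomialAt (wordExponent w) x := by
  rw [← (hc.hasSum.tsum_fiberwise wordExponent).tsum_eq, evalAt]
  refine tsum_congr fun α => ?_
  refine Eq.trans tsum_mul_right.symm (tsum_congr fun w => ?_)
  rw [w.2]

/-- The coefficients, indexed by words, of a formal multilinear series. -/
def wordCoeff [DecidableEq σ] (p : FormalMultilinearSeries ℝ (EuclideanSpace ℝ σ) ℝ)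
    (w : Σ n, Fin n → σ) : ℝ :=
  p w.1 fun k => EuclideanSpace.single (w.2 k) 1

theorem enorm_wordCoeff_le [DecidableEq σ]
    (p : FormalMultilinearSeries ℝ (EuclideanSpace ℝ σ) ℝ) (w : Σ n, Fin n → σ) :
    ‖wordCoeff p w‖ₑ ≤ ‖p w.1‖ₑ := by
  rw [enorm_le_iff_norm_le]
  refine ((p w.1).le_opNorm _).trans (le_of_eq ?_)
  simp

theorem apply_const_eq_sum_wordCoeff [DecidableEq σ]
    (p : FormalMultilinearSeries ℝ (EuclideanSpace ℝ σ) ℝ) (n : ℕ) (x : EuclideanSpace ℝ σ) :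
    (p n fun _ => x) =
      ∑ w : Fin n → σ, wordCoeff p ⟨n, w⟩ * monomialAt (wordExponent ⟨n, w⟩) x := by
  have hx : x = ∑ i, x i • EuclideanSpace.single i (1 : ℝ) := by
    ext j
    simp [Finset.sum_apply, Pi.single_apply]
  conv_lhs => rw [hx]
  rw [ContinuousMultilinearMap.map_sum]
  refine Finset.sum_congr rfl fun w _ => ?_
  rw [ContinuousMultilinearMap.map_smul_univ, monomialAt_wordExponent, smul_eq_mul, mul_comm]
  rfl

theorem tsum_enorm_wordCoeff_le [DecidableEq σ]
    (p : FormalMultilinearSeries ℝ (EuclideanSpace ℝ σ) ℝ) (r : ℝ≥0) :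
    ∑' w, ‖wordCoeff p w‖ₑ * (r : ℝ≥0∞) ^ w.1 ≤
      ∑' n, ‖p n‖ₑ * ((Fintype.card σ * r : ℝ≥0) : ℝ≥0∞) ^ n := by
  rw [ENNReal.tsum_sigma']
  refine ENNReal.tsum_le_tsum fun n => ?_
  calc
    _ = ∑ w : Fin n → σ, ‖wordCoeff p ⟨n, w⟩‖ₑ * (r : ℝ≥0∞) ^ n := tsum_fintype _
    _ ≤ ∑ _w : Fin n → σ, ‖p n‖ₑ * (r : ℝ≥0∞) ^ n := by
      gcongr with w
      exact enorm_wordCoeff_le p ⟨n, w⟩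
    _ = _ := by
      simp only [Finset.sum_const, Finset.card_univ, Fintype.card_fun, Fintype.card_fin,
        nsmul_eq_mul, Nat.cast_pow, ENNReal.coe_mul, ENNReal.coe_natCast, mul_pow]
      ring

theorem tsum_enorm_mul_pow_ne_top {E F : Type*} [NormedAddCommGroup E] [NormedSpace ℝ E]
    [NormedAddCommGroup F] [NormedSpace ℝ F] (p : FormalMultilinearSeries ℝ E F) {r : ℝ≥0}
    (hr : (r : ℝ≥0∞) < p.radius) : ∑' n, ‖p n‖ₑ * (r : ℝ≥0∞) ^ n ≠ ∞ := by
  simpa only [enorm_eq_nnnorm, ENNReal.coe_mul, ENNReal.coe_pow] using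
    ENNReal.tsum_coe_ne_top_iff_summable.2 (p.summable_nnnorm_mul_pow hr)

theorem exists_convergent_eventuallyEq {F : EuclideanSpace ℝ σ → ℝ} (hF : AnalyticAt ℝ F 0) :
    ∃ f ∈ convergent σ, F =ᶠ[𝓝 0] evalAt f := by
  classical
  obtain ⟨p, R, hp⟩ := hF
  obtain ⟨ρ, hρ_pos, hρR⟩ := ENNReal.lt_iff_exists_nnreal_btwn.1 hp.r_pos
  set r : ℝ≥0 := ρ / (Fintype.card σ + 1)
  have hr : 0 < r := div_pos (ENNReal.coe_pos.1 hρ_pos) (by positivity)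
  have hrρ : r ≤ ρ := div_le_self zero_le (by simp)
  have hcard : Fintype.card σ * r ≤ ρ := by
    rw [mul_div_assoc', div_le_iff₀ (by positivity), mul_comm]
    gcongr
    simp
  have hc : ∑' w, ‖wordCoeff p w‖ₑ * (r : ℝ≥0∞) ^ w.1 ≠ ∞ :=
    ne_top_of_le_ne_top (tsum_enorm_mul_pow_ne_top p
      ((ENNReal.coe_le_coe.2 hcard).trans_lt (hρR.trans_le hp.r_le)))
      (tsum_enorm_wordCoeff_le p r)
  refine ⟨collect (wordCoeff p), mem_convergent_of_wnorm_ne_top hr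
    (ne_top_of_le_ne_top hc (wnorm_collect_le _ r)), ?_⟩
  filter_upwards [Metric.ball_mem_nhds 0 (NNReal.coe_pos.2 hr)] with x hx
  rw [mem_ball_zero_iff] at hx
  have hsum := summable_words hc hx.le
  have hFx : HasSum (fun n => p n fun _ => x) (F x) := by
    have hxR : x ∈ Metric.eball 0 R := by
      rw [Metric.mem_eball, edist_zero_right, enorm_eq_nnnorm]
      exact (ENNReal.coe_lt_coe.2 (hx.trans_le hrρ)).trans hρR
    simpa only [zero_add] using hp.hasSum hxR
  rw [evalAt_collect hsum]
  simp only [apply_const_eq_sum_wordCoeff] at hFx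
  exact hFx.unique (hsum.hasSum.sigma fun n => hasSum_fintype _)

end Words

section Derivative

theorem summable_pd_majorant {f : Series σ} {i : σ} {r : ℝ≥0}
    (h : wnorm (radialWeight r) (pd i f) ≠ ∞) : Summable fun α : σ →₀ ℕ =>
      ‖coeff α f‖ * (α i * (r : ℝ) ^ (α - Finsupp.single i 1).degree) := by
  rw [← (add_left_injective (Finsupp.single i 1)).summable_iff]
  · refine (ENNReal.summable_toReal h).congr fun β => ?_
    have hβ : ‖(β i : ℝ) + 1‖ = β i + 1 := Real.norm_of_nonneg (by positivity)
    simp only [Function.comp_apply, coeff_pd, radialWeight, ENNReal.toReal_mul, toReal_enorm,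
      ENNReal.toReal_pow, ENNReal.coe_toReal, norm_mul, hβ, add_tsub_cancel_right,
      Finsupp.add_apply, Finsupp.single_eq_same, Nat.cast_add, Nat.cast_one, mul_assoc]
  · intro α hα
    rw [not_ne_iff.1 (mt exists_eq_add_single hα), Nat.cast_zero, zero_mul, mul_zero]

variable [Fintype σ]

theorem monomialAt_erase_add_smul_single [DecidableEq σ] (α : σ →₀ ℕ) (i : σ)
    (x : EuclideanSpace ℝ σ) (s : ℝ) :
    monomialAt (α.erase i) (x + s • EuclideanSpace.single i 1) = monomialAt (α.erase i) x := by
  refine Finset.prod_congr rfl fun j _ => ?_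
  by_cases h : j = i <;> simp [h]

theorem monomialAt_eq_pow_mul (α : σ →₀ ℕ) (i : σ) (x : EuclideanSpace ℝ σ) :
    monomialAt α x = x i ^ α i * monomialAt (α.erase i) x := by
  rw [← monomialAt_single, ← monomialAt_add, Finsupp.single_add_erase]

theorem monomialAt_tsub_single (α : σ →₀ ℕ) (i : σ) (x : EuclideanSpace ℝ σ) :
    monomialAt (α - Finsupp.single i 1) x = x i ^ (α i - 1) * monomialAt (α.erase i) x := by
  have h : (α - Finsupp.single i 1).erase i = α.erase i := by
    ext j
    by_cases hj : j = i <;> simp [hj]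
  rw [monomialAt_eq_pow_mul _ i, h, Finsupp.tsub_apply, Finsupp.single_eq_same]

theorem hasDerivAt_monomialAt [DecidableEq σ] (α : σ →₀ ℕ) (i : σ) (x : EuclideanSpace ℝ σ)
    (s : ℝ) :
    HasDerivAt (fun s : ℝ => monomialAt α (x + s • EuclideanSpace.single i 1))
      (α i * monomialAt (α - Finsupp.single i 1) (x + s • EuclideanSpace.single i 1)) s := by
  have hcoord (s : ℝ) : (x + s • EuclideanSpace.single i (1 : ℝ)) i = x i + s := by simp
  simp only [monomialAt_tsub_single, monomialAt_eq_pow_mul α i, hcoord,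
    monomialAt_erase_add_smul_single, ← mul_assoc]
  have hpow : HasDerivAt (fun s : ℝ => (x i + s) ^ α i) (α i * (x i + s) ^ (α i - 1)) s := by
    simpa only [mul_one] using ((hasDerivAt_id' s).const_add (x i)).fun_pow (α i)
  exact hpow.mul_const _

theorem evalAt_pd (i : σ) (f : Series σ) (x : EuclideanSpace ℝ σ) :
    evalAt (pd i f) x =
      ∑' α, coeff α f * (α i * monomialAt (α - Finsupp.single i 1) x) := by
  rw [← (add_left_injective (Finsupp.single i 1)).tsum_eq]
  · refine tsum_congr fun β => ?_
    rw [coeff_pd, add_tsub_cancel_right, Finsupp.add_apply, Finsupp.single_eq_same, Nat.cast_add,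
      Nat.cast_one, mul_assoc]
  · refine Function.support_subset_iff'.2 fun α hα => ?_
    rw [not_ne_iff.1 (mt exists_eq_add_single hα), Nat.cast_zero, zero_mul, mul_zero]

theorem hasLineDerivAt_evalAt [DecidableEq σ] {f : Series σ} {i : σ} {r : ℝ≥0}
    (hf : wnorm (radialWeight r) f ≠ ∞) (hpd : wnorm (radialWeight r) (pd i f) ≠ ∞)
    {x : EuclideanSpace ℝ σ} (hx : ‖x‖ < r) :
    HasLineDerivAt ℝ (evalAt f) (evalAt (pd i f) x) x (EuclideanSpace.single i 1) := by
  obtain ⟨δ, hδ, hball⟩ : ∃ δ > 0, ∀ s ∈ Metric.ball (0 : ℝ) δ,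
      ‖x + s • EuclideanSpace.single i (1 : ℝ)‖ ≤ r := by
    refine ⟨r - ‖x‖, sub_pos.2 hx, fun s hs => (norm_add_le _ _).trans ?_⟩
    rw [norm_smul, PiLp.norm_single, norm_one, mul_one]
    linarith [mem_ball_zero_iff.1 hs]
  have h0 : (0 : ℝ) ∈ Metric.ball (0 : ℝ) δ := Metric.mem_ball_self hδ
  have hderiv := hasDerivAt_tsum_of_isPreconnected
    (g := fun α (s : ℝ) => coeff α f * monomialAt α (x + s • EuclideanSpace.single i (1 : ℝ)))
    (summable_pd_majorant hpd) Metric.isOpen_ball (convex_ball (0 : ℝ) δ).isPreconnected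
    (fun α s _ => (hasDerivAt_monomialAt α i x s).const_mul _) (fun α s hs => ?_) h0
    (summable_norm_evalAt hf (hball 0 h0)).of_norm h0
  · rw [evalAt_pd, HasLineDerivAt]
    simp only [zero_smul, add_zero] at hderiv
    exact hderiv
  · rw [norm_mul, norm_mul, Real.norm_natCast]
    gcongr
    exact (norm_monomialAt_le _ _).trans (pow_le_pow_left₀ (norm_nonneg _) (hball s hs) _)

theorem eventually_fderiv_evalAt [DecidableEq σ] {f : Series σ} (hf : f ∈ convergent σ) (i : σ) :
    ∀ᶠ x in 𝓝 (0 : EuclideanSpace ℝ σ),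
      fderiv ℝ (evalAt f) x (EuclideanSpace.single i 1) = evalAt (pd i f) x := by
  obtain ⟨r, ⟨hfr, hpd⟩, hr⟩ := (((mem_convergent_iff.1 hf).and
    (mem_convergent_iff.1 (pd_mem_convergent i hf))).and self_mem_nhdsWithin).exists
  filter_upwards [(analyticAt_evalAt hf).eventually_analyticAt,
    Metric.ball_mem_nhds 0 (NNReal.coe_pos.2 hr)] with x hx_analytic hx
  exact (hx_analytic.differentiableAt.hasFDerivAt.hasLineDerivAt _).unique
    (hasLineDerivAt_evalAt hfr hpd (mem_ball_zero_iff.1 hx))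

end Derivative

/-! ### Jacobian matrices -/

section Jacobian

variable {d m n : ℕ}

theorem ofLp_fderiv (u : EuclideanSpace ℝ (Fin d) → EuclideanSpace ℝ (Fin n))
    (x v : EuclideanSpace ℝ (Fin d)) : (fderiv ℝ u x v).ofLp = Jac u x *ᵥ v.ofLp := by
  have hv : v = ∑ k, v k • EuclideanSpace.single k (1 : ℝ) := by
    ext j
    simp [Finset.sum_apply, Pi.single_apply]
  ext a
  conv_lhs => rw [hv]
  simp [Jac, mulVec, dotProduct, mul_comm]

theorem fderiv_eq_toEuclideanCLM_Jac
    (ψ : EuclideanSpace ℝ (Fin d) → EuclideanSpace ℝ (Fin d)) (x : EuclideanSpace ℝ (Fin d)) :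
    fderiv ℝ ψ x = toEuclideanCLM (𝕜 := ℝ) (Jac ψ x) :=
  ContinuousLinearMap.ext fun v => WithLp.ofLp_injective 2 (ofLp_fderiv ψ x v)

theorem Jac_eq_of_fderiv_eq {ψ : EuclideanSpace ℝ (Fin d) → EuclideanSpace ℝ (Fin d)}
    {x : EuclideanSpace ℝ (Fin d)} {M : Matrix (Fin d) (Fin d) ℝ}
    (h : fderiv ℝ ψ x = toEuclideanCLM (𝕜 := ℝ) M) : Jac ψ x = M :=
  toEuclideanCLM.injective ((fderiv_eq_toEuclideanCLM_Jac ψ x).symm.trans h)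

theorem Jac_apply {u : EuclideanSpace ℝ (Fin d) → EuclideanSpace ℝ (Fin n)}
    {x : EuclideanSpace ℝ (Fin d)} (hu : DifferentiableAt ℝ u x) (a : Fin n) (j : Fin d) :
    Jac u x a j = fderiv ℝ (fun y => u y a) x (EuclideanSpace.single j 1) := by
  have h : HasFDerivAt (fun y => u y a) ((EuclideanSpace.proj a).comp (fderiv ℝ u x)) x :=
    (EuclideanSpace.proj (𝕜 := ℝ) a).hasFDerivAt.comp x hu.hasFDerivAt
  rw [h.fderiv]
  rfl

theorem Jac_comp {v : EuclideanSpace ℝ (Fin m) → EuclideanSpace ℝ (Fin n)}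
    {φ : EuclideanSpace ℝ (Fin d) → EuclideanSpace ℝ (Fin m)} {x : EuclideanSpace ℝ (Fin d)}
    (hv : DifferentiableAt ℝ v (φ x)) (hφ : DifferentiableAt ℝ φ x) :
    Jac (v ∘ φ) x = Jac v (φ x) * Jac φ x := by
  ext a j
  rw [Jac, of_apply, fderiv_comp x hv hφ, ContinuousLinearMap.comp_apply, ofLp_fderiv]
  rfl

theorem analyticAt_Jac {ψ : EuclideanSpace ℝ (Fin d) → EuclideanSpace ℝ (Fin d)}
    {x : EuclideanSpace ℝ (Fin d)} (hψ : AnalyticAt ℝ ψ x) : AnalyticAt ℝ (Jac ψ) x := by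
  refine AnalyticAt.pi fun a => AnalyticAt.pi fun j => ?_
  exact ((EuclideanSpace.proj (𝕜 := ℝ) a).comp
    (ContinuousLinearMap.apply ℝ _ (EuclideanSpace.single j 1))).analyticAt _ |>.comp hψ.fderiv

theorem analyticAt_toLp [Fintype ι] {E : Type*} [NormedAddCommGroup E] [NormedSpace ℝ E]
    {u : ι → E → ℝ} {x : E} (h : ∀ a, AnalyticAt ℝ (u a) x) :
    AnalyticAt ℝ (fun y => WithLp.toLp 2 fun a => u a y : E → EuclideanSpace ℝ ι) x :=
  ((PiLp.continuousLinearEquiv 2 ℝ fun _ : ι => ℝ).symm.toContinuousLinearMap.analyticAt _).comp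
    (AnalyticAt.pi h)

section MatrixValued

variable {E : Type*} [NormedAddCommGroup E] [NormedSpace ℝ E]

theorem analyticAt_matrix_apply {A : E → Matrix (Fin m) (Fin n) ℝ} {x : E}
    (h : AnalyticAt ℝ A x) (i : Fin m) (j : Fin n) : AnalyticAt ℝ (fun y => A y i j) x :=
  analyticAt_pi_iff.1 (analyticAt_pi_iff.1 h i) j

theorem fderiv_matrix_apply {A : E → Matrix (Fin m) (Fin n) ℝ} {x : E}
    (h : DifferentiableAt ℝ A x) (i : Fin m) (j : Fin n) (v : E) :
    fderiv ℝ (fun y => A y i j) x v = fderiv ℝ A x v i j :=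
  DFunLike.congr_fun
    (hasFDerivAt_pi'.1 (hasFDerivAt_pi'.1 h.hasFDerivAt i) j).fderiv v

/-- Matrix multiplication as a continuous bilinear map. -/
def matrixMul (d : ℕ) : Matrix (Fin d) (Fin d) ℝ →L[ℝ] Matrix (Fin d) (Fin d) ℝ →L[ℝ]
    Matrix (Fin d) (Fin d) ℝ :=
  (LinearMap.mul ℝ (Matrix (Fin d) (Fin d) ℝ)).toContinuousBilinearMap

/-- Matrix transposition as a continuous linear map. -/
def matrixTranspose (d : ℕ) : Matrix (Fin d) (Fin d) ℝ →L[ℝ] Matrix (Fin d) (Fin d) ℝ :=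
  (transposeLinearEquiv (Fin d) (Fin d) ℝ ℝ).toLinearMap.toContinuousLinearMap

theorem analyticAt_matrix_mul {A B : E → Matrix (Fin d) (Fin d) ℝ} {x : E}
    (hA : AnalyticAt ℝ A x) (hB : AnalyticAt ℝ B x) : AnalyticAt ℝ (fun y => A y * B y) x :=
  ((matrixMul d).analyticAt_bilinear _).comp (hA.prod hB)

theorem analyticAt_matrix_transpose {A : E → Matrix (Fin d) (Fin d) ℝ} {x : E}
    (hA : AnalyticAt ℝ A x) : AnalyticAt ℝ (fun y => (A y)ᵀ) x :=
  ((matrixTranspose d).analyticAt _).comp hA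

theorem fderiv_matrix_mul {A B : E → Matrix (Fin d) (Fin d) ℝ} {x : E}
    (hA : DifferentiableAt ℝ A x) (hB : DifferentiableAt ℝ B x) (v : E) :
    fderiv ℝ (fun y => A y * B y) x v = A x * fderiv ℝ B x v + fderiv ℝ A x v * B x :=
  DFunLike.congr_fun ((matrixMul d).fderiv_of_bilinear hA hB) v

theorem fderiv_matrix_transpose {A : E → Matrix (Fin d) (Fin d) ℝ} {x : E}
    (hA : DifferentiableAt ℝ A x) (v : E) :
    fderiv ℝ (fun y => (A y)ᵀ) x v = (fderiv ℝ A x v)ᵀ :=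
  DFunLike.congr_fun ((matrixTranspose d).hasFDerivAt.comp x hA.hasFDerivAt).fderiv v

end MatrixValued

end Jacobian

/-! ### Local isometric immersions -/

section Geometry

variable {d n : ℕ}

/-- The metric `ψ^* g` induced from `g` by the map `ψ`. -/
def pullback (ψ : EuclideanSpace ℝ (Fin d) → EuclideanSpace ℝ (Fin d))
    (g : EuclideanSpace ℝ (Fin d) → Matrix (Fin d) (Fin d) ℝ) (x : EuclideanSpace ℝ (Fin d)) :
    Matrix (Fin d) (Fin d) ℝ :=
  (Jac ψ x)ᵀ * g (ψ x) * Jac ψ x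

/-- `g` is a real-analytic field of symmetric bilinear forms near `p`. Positivity, an open
condition, is only imposed at `p` itself where it is needed. -/
structure IsAnalyticFormAt (g : EuclideanSpace ℝ (Fin d) → Matrix (Fin d) (Fin d) ℝ)
    (p : EuclideanSpace ℝ (Fin d)) : Prop where
  analyticAt : AnalyticAt ℝ g p
  eventually_isSymm : ∀ᶠ x in 𝓝 p, (g x).IsSymm

theorem IsAnalyticFormAt.pullback {g : EuclideanSpace ℝ (Fin d) → Matrix (Fin d) (Fin d) ℝ}
    {ψ : EuclideanSpace ℝ (Fin d) → EuclideanSpace ℝ (Fin d)} {q : EuclideanSpace ℝ (Fin d)}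
    (hg : IsAnalyticFormAt g (ψ q)) (hψ : AnalyticAt ℝ ψ q) :
    IsAnalyticFormAt (pullback ψ g) q where
  analyticAt := analyticAt_matrix_mul (analyticAt_matrix_mul
    (analyticAt_matrix_transpose (analyticAt_Jac hψ)) (hg.analyticAt.comp hψ)) (analyticAt_Jac hψ)
  eventually_isSymm := by
    filter_upwards [hψ.continuousAt.eventually hg.eventually_isSymm] with x hx
    rw [IsSymm, JanetCartan.pullback, transpose_mul, transpose_mul, transpose_transpose, hx.eq,
      Matrix.mul_assoc]

/-- `g` is induced, near `p`, by a real-analytic map into the Janet dimension. -/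
def LocallyImmersible (g : EuclideanSpace ℝ (Fin d) → Matrix (Fin d) (Fin d) ℝ)
    (p : EuclideanSpace ℝ (Fin d)) : Prop :=
  ∃ u : EuclideanSpace ℝ (Fin d) → EuclideanSpace ℝ (Fin (d * (d + 1) / 2)),
    AnalyticAt ℝ u p ∧ ∀ᶠ x in 𝓝 p, (Jac u x)ᵀ * Jac u x = g x

theorem Jac_id (x : EuclideanSpace ℝ (Fin d)) : Jac id x = 1 :=
  Jac_eq_of_fderiv_eq (by rw [fderiv_id, map_one]; rfl)

theorem exists_analytic_right_inverse {ψ : EuclideanSpace ℝ (Fin d) → EuclideanSpace ℝ (Fin d)}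
    {q : EuclideanSpace ℝ (Fin d)} (hψ : AnalyticAt ℝ ψ q) (hJ : IsUnit (Jac ψ q)) :
    ∃ φ : EuclideanSpace ℝ (Fin d) → EuclideanSpace ℝ (Fin d),
      AnalyticAt ℝ φ (ψ q) ∧ φ (ψ q) = q ∧ ∀ᶠ y in 𝓝 (ψ q), ψ (φ y) = y := by
  obtain ⟨L, hL⟩ := hJ.map (toEuclideanCLM (n := Fin d) (𝕜 := ℝ))
  rw [← fderiv_eq_toEuclideanCLM_Jac] at hL
  set e := ContinuousLinearEquiv.unitsEquiv ℝ (EuclideanSpace ℝ (Fin d)) L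
  have he : fderiv ℝ ψ q = e := hL.symm
  have hs : HasStrictFDerivAt ψ (e : _ →L[ℝ] _) q := he ▸ hψ.hasStrictFDerivAt
  exact ⟨hs.localInverse ψ e q,
    (hs.toOpenPartialHomeomorph ψ).analyticAt_symm' hs.mem_toOpenPartialHomeomorph_source hψ he,
    hs.localInverse_apply_image, hs.eventually_right_inverse⟩

theorem LocallyImmersible.of_pullback {g : EuclideanSpace ℝ (Fin d) → Matrix (Fin d) (Fin d) ℝ}
    {ψ : EuclideanSpace ℝ (Fin d) → EuclideanSpace ℝ (Fin d)} {q : EuclideanSpace ℝ (Fin d)}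
    (hψ : AnalyticAt ℝ ψ q) (hJ : IsUnit (Jac ψ q)) (h : LocallyImmersible (pullback ψ g) q) :
    LocallyImmersible g (ψ q) := by
  obtain ⟨v, hv, hvg⟩ := h
  obtain ⟨φ, hφ, hφq, hψφ⟩ := exists_analytic_right_inverse hψ hJ
  have hφ_tendsto : Filter.Tendsto φ (𝓝 (ψ q)) (𝓝 q) := by
    simpa only [hφq] using hφ.continuousAt.tendsto
  refine ⟨v ∘ φ, AnalyticAt.comp (by rwa [hφq]) hφ, ?_⟩
  filter_upwards [hφ.eventually_analyticAt, hφ_tendsto.eventually hv.eventually_analyticAt,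
    hφ_tendsto.eventually hψ.eventually_analyticAt, hφ_tendsto.eventually hvg, hψφ,
    hψφ.eventually_nhds] with y hφy hvy hψy hvgy hψφy hψφ_nhds
  have hinv : Jac ψ (φ y) * Jac φ y = 1 := by
    have hid : ψ ∘ φ =ᶠ[𝓝 y] id := hψφ_nhds
    rw [← Jac_comp hψy.differentiableAt hφy.differentiableAt, Jac, hid.fderiv_eq]
    exact Jac_id y
  calc (Jac (v ∘ φ) y)ᵀ * Jac (v ∘ φ) y
      = (Jac φ y)ᵀ * ((Jac v (φ y))ᵀ * Jac v (φ y)) * Jac φ y := by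
        simp only [Jac_comp hvy.differentiableAt hφy.differentiableAt, transpose_mul,
          Matrix.mul_assoc]
    _ = (Jac ψ (φ y) * Jac φ y)ᵀ * g y * (Jac ψ (φ y) * Jac φ y) := by
        simp only [hvgy, pullback, hψφy, transpose_mul, Matrix.mul_assoc]
    _ = g y := by rw [hinv, transpose_one, Matrix.one_mul, Matrix.mul_one]

theorem injective_fderiv_of_posDef {u : EuclideanSpace ℝ (Fin d) → EuclideanSpace ℝ (Fin n)}
    {p : EuclideanSpace ℝ (Fin d)} (h : ((Jac u p)ᵀ * Jac u p).PosDef) :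
    Function.Injective (fderiv ℝ u p) := by
  refine (injective_iff_map_eq_zero _).2 fun v hv => ?_
  have hJv : Jac u p *ᵥ v.ofLp = 0 := by rw [← ofLp_fderiv, hv, WithLp.ofLp_zero]
  refine WithLp.ofLp_injective 2 (mulVec_injective_of_isUnit h.isUnit ?_)
  rw [← mulVec_mulVec, hJv, mulVec_zero, WithLp.ofLp_zero, mulVec_zero]

theorem exists_injOn_of_injective_fderiv {E F : Type*} [NormedAddCommGroup E] [NormedSpace ℝ E]
    [CompleteSpace E] [NormedAddCommGroup F] [NormedSpace ℝ F] [FiniteDimensional ℝ F]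
    {u : E → F} {u' : E →L[ℝ] F} {p : E} (hu : HasStrictFDerivAt u u' p)
    (hinj : Function.Injective u') : ∃ V ∈ 𝓝 p, Set.InjOn u V := by
  obtain ⟨R, hR⟩ := LinearMap.exists_leftInverse_of_injective (u' : E →ₗ[ℝ] F)
    (LinearMap.ker_eq_bot.2 hinj)
  have hcomp : HasStrictFDerivAt (R.toContinuousLinearMap ∘ u)
      (ContinuousLinearEquiv.refl ℝ E : E →L[ℝ] E) p := by
    have hRu' : R.toContinuousLinearMap.comp u' = ContinuousLinearEquiv.refl ℝ E :=
      ContinuousLinearMap.ext (LinearMap.congr_fun hR)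
    exact hRu' ▸ R.toContinuousLinearMap.hasStrictFDerivAt.comp p hu
  exact ⟨(hcomp.toOpenPartialHomeomorph _).source,
    (hcomp.toOpenPartialHomeomorph _).open_source.mem_nhds
      hcomp.mem_toOpenPartialHomeomorph_source,
    .of_comp (hcomp.toOpenPartialHomeomorph _).injOn⟩

end Geometry

/-! ### Normal coordinates -/

section NormalCoordinates

variable {d : ℕ}

theorem eventually_Jac_transpose_mul_Jac [Fintype ι] {n : ℕ} {u : ι → Series (Fin d)}
    (hu : ∀ a, u a ∈ convergent (Fin d)) (e : Fin n ≃ ι) :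
    let U : EuclideanSpace ℝ (Fin d) → EuclideanSpace ℝ (Fin n) :=
      fun x => WithLp.toLp 2 fun a => evalAt (u (e a)) x
    AnalyticAt ℝ U 0 ∧ ∀ᶠ x in 𝓝 0, (Jac U x)ᵀ * Jac U x = (induced u).map (evalAt · x) := by
  intro U
  have hU : AnalyticAt ℝ U 0 := analyticAt_toLp fun a => analyticAt_evalAt (hu (e a))
  refine ⟨hU, ?_⟩
  filter_upwards [hU.eventually_analyticAt,
    Filter.eventually_all.2 fun i => Filter.eventually_all.2 fun a =>
      eventually_fderiv_evalAt (hu a) i,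
    Filter.eventually_all.2 fun i => Filter.eventually_all.2 fun j =>
      eventually_evalAt_dotProduct (u := pd i ∘ u) (v := pd j ∘ u)
        (fun a => pd_mem_convergent i (hu a)) fun a => pd_mem_convergent j (hu a)]
    with x hUx hpd hdot
  ext i j
  rw [Matrix.map_apply, induced_apply, hdot, dotProduct, ← e.sum_comp, Matrix.mul_apply]
  refine Finset.sum_congr rfl fun a _ => ?_
  rw [Matrix.transpose_apply, Jac_apply hUx.differentiableAt, Jac_apply hUx.differentiableAt]
  exact congrArg₂ (· * ·) (hpd i (e a)) (hpd j (e a))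

theorem IsAnalyticFormAt.exists_isFlat {g : EuclideanSpace ℝ (Fin d) → Matrix (Fin d) (Fin d) ℝ}
    (hg : IsAnalyticFormAt g 0) (h_one : g 0 = 1)
    (h_fderiv : ∀ k, fderiv ℝ g 0 (EuclideanSpace.single k 1) = 0) :
    ∃ f : Matrix (Fin d) (Fin d) (Series (Fin d)),
      IsFlat f ∧ ∀ᶠ x in 𝓝 0, g x = f.map (evalAt · x) := by
  choose f hf hgf using fun i j =>
    exists_convergent_eventuallyEq (analyticAt_matrix_apply hg.analyticAt i j)
  have hgf_sorted : ∀ i j, (g · i j) =ᶠ[𝓝 0] evalAt (f (min i j) (max i j)) := fun i j => by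
    filter_upwards [hgf (min i j) (max i j), hg.eventually_isSymm] with x hx hsymm
    rw [← hx]
    rcases le_total i j with h | h
    · rw [min_eq_left h, max_eq_right h]
    · rw [min_eq_right h, max_eq_left h, hsymm.apply]
  refine ⟨of fun i j => f (min i j) (max i j), ⟨?_, fun i j => hf _ _, ?_, fun i j k => ?_⟩, ?_⟩
  · ext i j
    rw [transpose_apply, of_apply, of_apply, min_comm, max_comm]
  · ext i j
    rw [map_apply, of_apply, ← evalAt_zero_right, ← h_one]
    exact (hgf_sorted i j).self_of_nhds.symm
  · rw [of_apply, ← evalAt_zero_right, ← (eventually_fderiv_evalAt (hf _ _) k).self_of_nhds,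
      ← (hgf_sorted i j).fderiv_eq, fderiv_matrix_apply hg.analyticAt.differentiableAt, h_fderiv,
      Matrix.zero_apply]
  · filter_upwards [Filter.eventually_all.2 fun i => Filter.eventually_all.2 (hgf_sorted i)]
      with x hx
    exact Matrix.ext hx

theorem exists_realizable_univ {f : Matrix (Fin d) (Fin d) (Series (Fin d))} (hf : IsFlat f) :
    ∃ T, Realizable Finset.univ T f := by
  cases d with
  | zero => exact ⟨∅, realizable_empty f⟩
  | succ d =>
    have h := realizable_insert (Finset.notMem_erase (0 : Fin (d + 1)) Finset.univ) hf
    rw [Finset.insert_erase (Finset.mem_univ 0)] at h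
    exact ⟨_, h⟩

theorem LocallyImmersible.of_flat {g : EuclideanSpace ℝ (Fin d) → Matrix (Fin d) (Fin d) ℝ}
    (hg : IsAnalyticFormAt g 0) (h_one : g 0 = 1)
    (h_fderiv : ∀ k, fderiv ℝ g 0 (EuclideanSpace.single k 1) = 0) :
    LocallyImmersible g 0 := by
  obtain ⟨f, hf, hgf⟩ := hg.exists_isFlat h_one h_fderiv
  obtain ⟨T, ι, _, u, hcard, hu, -, hind⟩ := exists_realizable_univ hf
  rw [Finset.card_univ, Fintype.card_fin] at hcard
  obtain ⟨hU, hJac⟩ := eventually_Jac_transpose_mul_Jac hu (Fintype.equivFinOfCardEq hcard).symm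
  have hind_eq : induced u = f :=
    Matrix.ext fun i j => hind i (Finset.mem_univ i) j (Finset.mem_univ j)
  refine ⟨_, hU, ?_⟩
  filter_upwards [hJac, hgf] with x hJx hgx
  rw [hJx, hgx, hind_eq]

/-- The quadratic change of coordinates `x ↦ x - Γ(x, x) / 2`, where `Γ k` is the matrix
`Γᵃₖᵢ` of the `k`-th slice of the Christoffel symbols. -/
def quadChart (Γ : Fin d → Matrix (Fin d) (Fin d) ℝ) (x : EuclideanSpace ℝ (Fin d)) :
    EuclideanSpace ℝ (Fin d) :=
  WithLp.toLp 2 fun a => x a - 2⁻¹ * ∑ i, ∑ j, Γ i a j * (x i * x j)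

theorem quadChart_zero (Γ : Fin d → Matrix (Fin d) (Fin d) ℝ) : quadChart Γ 0 = 0 := by
  ext a
  simp [quadChart]

theorem analyticAt_quadChart (Γ : Fin d → Matrix (Fin d) (Fin d) ℝ)
    (x : EuclideanSpace ℝ (Fin d)) : AnalyticAt ℝ (quadChart Γ) x := by
  have hcoord : ∀ a, AnalyticAt ℝ (fun y : EuclideanSpace ℝ (Fin d) => y a) x :=
    fun a => (EuclideanSpace.proj (𝕜 := ℝ) a).analyticAt x
  exact analyticAt_toLp fun a => (hcoord a).sub <| analyticAt_const.mul <|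
    Finset.analyticAt_fun_sum _ fun i _ => Finset.analyticAt_fun_sum _ fun j _ =>
      analyticAt_const.mul ((hcoord i).mul (hcoord j))

theorem Jac_quadChart {Γ : Fin d → Matrix (Fin d) (Fin d) ℝ}
    (hΓ : ∀ i a j, Γ i a j = Γ j a i) (x : EuclideanSpace ℝ (Fin d)) :
    Jac (quadChart Γ) x = 1 - ∑ i, x i • Γ i := by
  have hcoord : ∀ a, HasFDerivAt (fun y : EuclideanSpace ℝ (Fin d) => y a)
      (EuclideanSpace.proj (𝕜 := ℝ) a : EuclideanSpace ℝ (Fin d) →L[ℝ] ℝ) x :=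
    fun a => (EuclideanSpace.proj (𝕜 := ℝ) a).hasFDerivAt
  ext a k
  have hquad : HasFDerivAt (fun y => quadChart Γ y a) _ x :=
    (hcoord a).sub ((HasFDerivAt.fun_sum (u := Finset.univ) fun i _ =>
      HasFDerivAt.fun_sum (u := Finset.univ) fun j _ =>
        ((hcoord i).mul (hcoord j)).const_mul (Γ i a j)).const_mul 2⁻¹)
  rw [Jac_apply (analyticAt_quadChart Γ x).differentiableAt, hquad.fderiv]
  simp [Matrix.one_apply, Matrix.sum_apply, Finset.sum_add_distrib, hΓ k a, mul_comm (x _)]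
  ring

theorem fderiv_Jac_quadChart {Γ : Fin d → Matrix (Fin d) (Fin d) ℝ}
    (hΓ : ∀ i a j, Γ i a j = Γ j a i) (x : EuclideanSpace ℝ (Fin d)) (k : Fin d) :
    fderiv ℝ (Jac (quadChart Γ)) x (EuclideanSpace.single k 1) = -Γ k := by
  ext a j
  have hentry : HasFDerivAt (fun y => Jac (quadChart Γ) y a j)
      (-∑ i, (EuclideanSpace.proj i : EuclideanSpace ℝ (Fin d) →L[ℝ] ℝ).smulRight (Γ i a j)) x := by
    simp only [Jac_quadChart hΓ, Matrix.sub_apply, Matrix.sum_apply, Matrix.smul_apply]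
    exact (HasFDerivAt.fun_sum fun i _ => ((EuclideanSpace.proj i :
      EuclideanSpace ℝ (Fin d) →L[ℝ] ℝ).smulRight (Γ i a j)).hasFDerivAt).const_sub _
  rw [← fderiv_matrix_apply (analyticAt_Jac (analyticAt_quadChart Γ x)).differentiableAt,
    hentry.fderiv]
  simp

/-- The Christoffel symbols of the first kind at a point, from the partial derivatives `D k` of the
metric there. -/
def christoffelMatrix (D : Fin d → Matrix (Fin d) (Fin d) ℝ) (k : Fin d) :
    Matrix (Fin d) (Fin d) ℝ :=
  of fun a i => 2⁻¹ * (D i k a + D k i a - D a i k)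

theorem christoffelMatrix_comm {D : Fin d → Matrix (Fin d) (Fin d) ℝ} (hD : ∀ k, (D k).IsSymm)
    (k a i : Fin d) : christoffelMatrix D k a i = christoffelMatrix D i a k := by
  simp only [christoffelMatrix, of_apply, (hD a).apply i k]
  ring

theorem transpose_christoffelMatrix_add {D : Fin d → Matrix (Fin d) (Fin d) ℝ}
    (hD : ∀ k, (D k).IsSymm) (k : Fin d) :
    (christoffelMatrix D k)ᵀ + christoffelMatrix D k = D k := by
  ext i a
  simp only [christoffelMatrix, Matrix.add_apply, transpose_apply, of_apply, (hD k).apply i a,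
    (hD a).apply i k, (hD i).apply a k]
  ring

theorem fderiv_pullback {g : EuclideanSpace ℝ (Fin d) → Matrix (Fin d) (Fin d) ℝ}
    {ψ : EuclideanSpace ℝ (Fin d) → EuclideanSpace ℝ (Fin d)} {q : EuclideanSpace ℝ (Fin d)}
    (hg : AnalyticAt ℝ g (ψ q)) (hψ : AnalyticAt ℝ ψ q) (v : EuclideanSpace ℝ (Fin d)) :
    fderiv ℝ (pullback ψ g) q v =
      (Jac ψ q)ᵀ * g (ψ q) * fderiv ℝ (Jac ψ) q v +
        ((Jac ψ q)ᵀ * fderiv ℝ g (ψ q) (fderiv ℝ ψ q v) +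
          (fderiv ℝ (Jac ψ) q v)ᵀ * g (ψ q)) * Jac ψ q := by
  have hJ := analyticAt_Jac hψ
  have hJT := analyticAt_matrix_transpose hJ
  have hgψ : AnalyticAt ℝ (fun x => g (ψ x)) q := hg.comp hψ
  have hgψ_fderiv : fderiv ℝ (fun x => g (ψ x)) q v = fderiv ℝ g (ψ q) (fderiv ℝ ψ q v) :=
    DFunLike.congr_fun (fderiv_comp q hg.differentiableAt hψ.differentiableAt) v
  calc fderiv ℝ (pullback ψ g) q v
      = (Jac ψ q)ᵀ * g (ψ q) * fderiv ℝ (Jac ψ) q v +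
          fderiv ℝ (fun x => (Jac ψ x)ᵀ * g (ψ x)) q v * Jac ψ q :=
        fderiv_matrix_mul (analyticAt_matrix_mul hJT hgψ).differentiableAt hJ.differentiableAt v
    _ = _ := by
        rw [fderiv_matrix_mul hJT.differentiableAt hgψ.differentiableAt,
          fderiv_matrix_transpose hJ.differentiableAt, hgψ_fderiv]

theorem LocallyImmersible.of_eq_one {g : EuclideanSpace ℝ (Fin d) → Matrix (Fin d) (Fin d) ℝ}
    (hg : IsAnalyticFormAt g 0) (h_one : g 0 = 1) : LocallyImmersible g 0 := by
  set D : Fin d → Matrix (Fin d) (Fin d) ℝ := fun k =>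
    fderiv ℝ g 0 (EuclideanSpace.single k 1) with hD
  have hD_symm : ∀ k, (D k).IsSymm := fun k => by
    have hgT : (fun x => (g x)ᵀ) =ᶠ[𝓝 0] g := hg.eventually_isSymm
    rw [IsSymm, hD, ← fderiv_matrix_transpose hg.analyticAt.differentiableAt, hgT.fderiv_eq]
  set Γ := christoffelMatrix D
  have hΓ : ∀ k a i, Γ k a i = Γ i a k := christoffelMatrix_comm hD_symm
  have hψ := analyticAt_quadChart Γ 0
  have hψ_zero := quadChart_zero Γ
  have hJ : Jac (quadChart Γ) 0 = 1 := by
    rw [Jac_quadChart hΓ]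
    simp
  have hψ_fderiv : fderiv ℝ (quadChart Γ) 0 = .id ℝ _ := by
    rw [fderiv_eq_toEuclideanCLM_Jac, hJ, map_one]
    rfl
  rw [← hψ_zero] at hg ⊢
  refine .of_pullback hψ (hJ ▸ isUnit_one) (.of_flat (hg.pullback hψ) ?_ ?_)
  · rw [pullback, hJ, hψ_zero, h_one, transpose_one, Matrix.mul_one, Matrix.mul_one]
  · intro k
    have hΓD : (Γ k)ᵀ + Γ k = fderiv ℝ g 0 (EuclideanSpace.single k 1) :=
      transpose_christoffelMatrix_add hD_symm k
    rw [fderiv_pullback hg.analyticAt hψ, hψ_fderiv, fderiv_Jac_quadChart hΓ, hJ, hψ_zero, h_one]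
    simp [← hΓD]

open scoped MatrixOrder in
theorem exists_transpose_mul_mul_eq_one {n : Type*} [Fintype n] [DecidableEq n]
    {G : Matrix n n ℝ} (hG : G.PosDef) : ∃ M : Matrix n n ℝ, IsUnit M ∧ Mᵀ * G * M = 1 := by
  obtain ⟨B, hB⟩ := CStarAlgebra.nonneg_iff_eq_star_mul_self.mp hG.posSemidef.nonneg
  rw [Matrix.star_eq_conjTranspose, conjTranspose_eq_transpose_of_trivial] at hB
  have hdet : IsUnit B.det := by
    have hdet_pos := hG.det_pos
    rw [hB, det_mul, det_transpose] at hdet_pos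
    exact isUnit_iff_ne_zero.2 (right_ne_zero_of_mul hdet_pos.ne')
  refine ⟨B⁻¹, isUnit_nonsing_inv_iff.2 ((isUnit_iff_isUnit_det B).2 hdet), ?_⟩
  rw [hB, Matrix.mul_assoc, Matrix.mul_assoc, mul_nonsing_inv B hdet, Matrix.mul_one,
    ← transpose_mul, mul_nonsing_inv B hdet, transpose_one]

theorem LocallyImmersible.of_posDef {g : EuclideanSpace ℝ (Fin d) → Matrix (Fin d) (Fin d) ℝ}
    {p : EuclideanSpace ℝ (Fin d)} (hg : IsAnalyticFormAt g p) (hp : (g p).PosDef) :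
    LocallyImmersible g p := by
  obtain ⟨M, hM, hMg⟩ := exists_transpose_mul_mul_eq_one hp
  set L := toEuclideanCLM (𝕜 := ℝ) M
  set ψ : EuclideanSpace ℝ (Fin d) → EuclideanSpace ℝ (Fin d) := fun x => p + L x
  have hψ : AnalyticAt ℝ ψ 0 := analyticAt_const.add (L.analyticAt 0)
  have hJ : Jac ψ 0 = M := Jac_eq_of_fderiv_eq (L.hasFDerivAt.const_add p).fderiv
  have hψ_zero : ψ 0 = p := by simp [ψ]
  rw [← hψ_zero] at hg ⊢
  refine .of_pullback hψ (hJ ▸ hM) (.of_eq_one (hg.pullback hψ) ?_)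
  rw [pullback, hJ, hψ_zero, hMg]

end NormalCoordinates

end JanetCartan

/-- **Janet–Cartan theorem.** Every real-analytic Riemannian metric on an open subset of
`ℝᵈ` admits, near any point, a local real-analytic isometric embedding into `ℝ^{s_d}`,
where `s_d = d(d+1)/2` is the Janet dimension. -/
theorem janet_cartan (d : ℕ) (hd : 1 ≤ d)
    (Ω : Set (EuclideanSpace ℝ (Fin d))) (hΩ : IsOpen Ω)
    (p : EuclideanSpace ℝ (Fin d)) (hp : p ∈ Ω)
    (g : EuclideanSpace ℝ (Fin d) → Matrix (Fin d) (Fin d) ℝ)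
    (hg_analytic : AnalyticOnNhd ℝ g Ω)
    (hg_met : ∀ x ∈ Ω, (g x).IsSymm ∧ (g x).PosDef) :
    ∃ U : Set (EuclideanSpace ℝ (Fin d)), IsOpen U ∧ p ∈ U ∧ U ⊆ Ω ∧
      ∃ u : EuclideanSpace ℝ (Fin d) → EuclideanSpace ℝ (Fin (d * (d + 1) / 2)),
        AnalyticOnNhd ℝ u U ∧ Set.InjOn u U ∧
        ∀ x ∈ U, (Jac u x)ᵀ * Jac u x = g x := by
  have hg : JanetCartan.IsAnalyticFormAt g p :=
    ⟨hg_analytic p hp, Filter.eventually_of_mem (hΩ.mem_nhds hp) fun x hx => (hg_met x hx).1⟩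
  have hpos : (g p).PosDef := (hg_met p hp).2
  obtain ⟨u, hu, hug⟩ := JanetCartan.LocallyImmersible.of_posDef hg hpos
  have hinj : Function.Injective (fderiv ℝ u p) :=
    JanetCartan.injective_fderiv_of_posDef (by rwa [hug.self_of_nhds])
  obtain ⟨V, hV, hVinj⟩ := JanetCartan.exists_injOn_of_injective_fderiv hu.hasStrictFDerivAt hinj
  obtain ⟨U, hU, hUo, hpU⟩ := mem_nhds_iff.1 <| Filter.inter_mem
    (Filter.inter_mem (hΩ.mem_nhds hp) hV) (Filter.inter_mem hu.eventually_analyticAt hug)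
  exact ⟨U, hUo, hpU, fun x hx => (hU hx).1.1, u, fun x hx => (hU hx).2.1,
    hVinj.mono fun x hx => (hU hx).1.2, fun x hx => (hU hx).2.2⟩
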